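/- arXiv:2101.01458 — 3 statements merged into one kernel-verified Lean document; each statement's English description precedes it below -/
import Mathlib

section
/- Let $G$ be an infinite countable discrete amenable group and $d$ a positive integer. Then there exists a compact metric space $X$ and a continuous action of $G$ on $X$ which is minimal (every orbit is dense), whose mean dimension equals $d/2$, and which cannot be embedded in the full $G$-shift on $([0,1]^d)^G$ (i.e., there is no continuous injective $G$-equivariant map from $X$ into $([0,1]^d)^G$ equipped with the shift action). -/
open Set Filter Topology
open scoped ENNReal NNReal symmDiff

/-- Right translate `S·c = {s * c : s ∈ S}` of a subset of a group. -/
def rightTranslate {G : Type*} [Group G] (S : Set G) (c : G) : Set G := (fun s => s * c) '' S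

/-- The boundary set `B(F,T) = {g ∈ G : Tg ∩ F ≠ ∅ and Tg ∩ (G \ F) ≠ ∅}`. -/
def Bset {G : Type*} [Group G] (F T : Set G) : Set G :=
  {g : G | (rightTranslate T g ∩ F).Nonempty ∧ (rightTranslate T g ∩ Fᶜ).Nonempty}

/-- `F` is `(T,ε)`-invariant: `|B(F,T)| < ε * |F|`. -/
def IsInvariantSet {G : Type*} [Group G] (F T : Set G) (ε : ℝ) : Prop :=
  ((Bset F T).ncard : ℝ) < ε * (F.ncard : ℝ)

/-- A Følner sequence of nonempty finite subsets of `G`. -/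
def IsFolnerSeq {G : Type*} [Group G] (F : ℕ → Set G) : Prop :=
  (∀ n, (F n).Finite ∧ (F n).Nonempty) ∧
    ∀ g : G, Tendsto
      (fun n => ((symmDiff (F n) ((fun x => g * x) '' (F n))).ncard : ℝ) / ((F n).ncard : ℝ))
      atTop (nhds 0)

/-- A countable discrete group is amenable if it admits a Følner sequence. -/
def AmenableGroup (G : Type*) [Group G] : Prop := ∃ F : ℕ → Set G, IsFolnerSeq F

/-- A tiling of `G`: pairwise disjoint nonempty finite subsets covering `G`. -/
def IsTilingOf {G : Type*} [Group G] (𝒯 : Set (Set G)) : Prop :=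
  (∀ T ∈ 𝒯, T.Finite ∧ T.Nonempty) ∧
    (∀ T ∈ 𝒯, ∀ T' ∈ 𝒯, T ≠ T' → Disjoint T T') ∧ ⋃₀ 𝒯 = Set.univ

/-- `𝒮` is a (finite) set of shapes for the tiling `𝒯`. -/
def IsShapeSet {G : Type*} [Group G] (𝒯 𝒮 : Set (Set G)) : Prop :=
  𝒮.Finite ∧ (∀ S ∈ 𝒮, S.Finite ∧ S.Nonempty) ∧
    ∀ T ∈ 𝒯, ∃ S ∈ 𝒮, ∃ c : G, T = rightTranslate S c

/-- The center of a shape `S` relative to a tiling `𝒯`. -/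
def center {G : Type*} [Group G] (𝒯 : Set (Set G)) (S : Set G) : Set G :=
  {c : G | rightTranslate S c ∈ 𝒯}

/-- A syndetic subset: `G = F·A` for some finite `F`. -/
def SyndeticSet {G : Type*} [Group G] (A : Set G) : Prop :=
  ∃ F : Set G, F.Finite ∧ Set.image2 (· * ·) F A = Set.univ

/-- The translation `𝒯g = {Tg : T ∈ 𝒯}` of a tiling. -/
def tilingTranslate {G : Type*} [Group G] (𝒯 : Set (Set G)) (g : G) : Set (Set G) :=
  (fun T => rightTranslate T g) '' 𝒯

/-- The restriction `𝒯|_F = {T ∩ F : T ∈ 𝒯}`. -/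
def tilingRestrict {G : Type*} [Group G] (𝒯 : Set (Set G)) (F : Set G) : Set (Set G) :=
  (fun T => T ∩ F) '' 𝒯

/-- The full `G`-shift: `(σ_g x)_h = x_{hg}`. -/
def shift {G K : Type*} [Group G] (g : G) (x : G → K) : G → K := fun h => x (h * g)

/-- A subshift: a closed shift-invariant subset of `K^G`. -/
def IsSubshift {G : Type*} (K : Type*) [Group G] [TopologicalSpace K]
    (X : Set (G → K)) : Prop :=
  IsClosed X ∧ ∀ g : G, ∀ x ∈ X, shift g x ∈ X

/-- A weight `α : G → (0,∞)` with `α e = 1` and `∑ α < ∞`, defining the product metric. -/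
def IsGoodWeight {G : Type*} [Group G] (α : G → ℝ) : Prop :=
  α 1 = 1 ∧ (∀ g, 0 < α g) ∧ Summable α

/-- The metric `ρ(x,y) = ∑_g α_g d(x_g, y_g)` on `K^G`. -/
noncomputable def rhoMetric {G K : Type*} [Group G] [PseudoMetricSpace K] (α : G → ℝ)
    (x y : G → K) : ℝ :=
  ∑' g : G, α g * dist (x g) (y g)

/-- `ρ_F(x,y) = max_{g ∈ F} ρ(gx, gy)` for finite `F ⊆ G`. -/
noncomputable def rhoMetricF {G K : Type*} [Group G] [PseudoMetricSpace K] (α : G → ℝ)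
    (F : Set G) (x y : G → K) : ℝ :=
  sSup ((fun g => rhoMetric α (shift g x) (shift g y)) '' F)

/-- `d_F(x,y) = max_{g∈F} d(gx, gy)` for an action `φ`. -/
noncomputable def dynDist {G X : Type*} [Group G] [PseudoMetricSpace X]
    (φ : G → X → X) (F : Set G) (x y : X) : ℝ :=
  sSup ((fun g => dist (φ g x) (φ g y)) '' F)

/-- An `ε`-embedding w.r.t. `ρ`: continuous, and `f x = f y → ρ x y < ε`. -/
def IsEpsEmb {X Y : Type*} [TopologicalSpace X] [TopologicalSpace Y]
    (ρ : X → X → ℝ) (ε : ℝ) (f : X → Y) : Prop :=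
  Continuous f ∧ ∀ x y, f x = f y → ρ x y < ε

/-- `Widim_ε(X,ρ) ≤ n`: there is an `ε`-embedding of `X` into (the geometric realization of)
a finite simplicial complex all of whose faces have at most `n+1` vertices. -/
def WidimLE (X : Type*) [TopologicalSpace X] (ρ : X → X → ℝ) (ε : ℝ) (n : ℕ) : Prop :=
  ∃ (N : ℕ) (P : Geometry.SimplicialComplex ℝ (Fin N → ℝ)),
    P.faces.Finite ∧ (∀ s ∈ P.faces, s.card ≤ n + 1) ∧
      ∃ f : X → P.space, IsEpsEmb ρ ε f

/-- `Widim_ε(X,ρ)`: the minimum dimension of a polyhedron admitting an `ε`-embedding of `X`. -/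
noncomputable def widim (X : Type*) [TopologicalSpace X] (ρ : X → X → ℝ) (ε : ℝ) : ℕ∞ :=
  sInf {n : ℕ∞ | ∃ m : ℕ, n = (m : ℕ∞) ∧ WidimLE X ρ ε m}

/-- Covering dimension `≤ n`: every open cover admits an open refinement of multiplicity `≤ n+1`. -/
def DimLE (X : Type*) [TopologicalSpace X] (n : ℕ) : Prop :=
  ∀ 𝒰 : Set (Set X), (∀ U ∈ 𝒰, IsOpen U) → ⋃₀ 𝒰 = Set.univ →
    ∃ 𝒱 : Set (Set X), (∀ V ∈ 𝒱, IsOpen V) ∧ ⋃₀ 𝒱 = Set.univ ∧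
      (∀ V ∈ 𝒱, ∃ U ∈ 𝒰, V ⊆ U) ∧
      ∀ x : X, ({V ∈ 𝒱 | x ∈ V}).Finite ∧ ({V ∈ 𝒱 | x ∈ V}).ncard ≤ n + 1

/-- Topological (covering) dimension, valued in `ℕ∞`. -/
noncomputable def covDim (X : Type*) [TopologicalSpace X] : ℕ∞ :=
  sInf {n : ℕ∞ | ∃ m : ℕ, n = (m : ℕ∞) ∧ DimLE X m}

/-- Mean dimension of the action `φ` computed along the Følner sequence `F`
(as `sup_{ε>0} limsup_n Widim_ε(X, d_{F_n}) / |F_n|`). -/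
noncomputable def mdimAlong {G X : Type*} [Group G] [PseudoMetricSpace X]
    (φ : G → X → X) (F : ℕ → Set G) : ℝ≥0∞ :=
  ⨆ ε : {ε : ℝ // 0 < ε}, Filter.limsup
    (fun n => ((widim X (dynDist φ (F n)) ε.1 : ℕ∞) : ℝ≥0∞) / ((F n).ncard : ℝ≥0∞)) atTop

/-- Mean dimension of a subshift `X ⊆ K^G` computed along the Følner sequence `F`,
with the metric `ρ` induced by the weight `α`. -/
noncomputable def mdimSubshift {G K : Type*} [Group G] [PseudoMetricSpace K] (α : G → ℝ)
    (X : Set (G → K)) (F : ℕ → Set G) : ℝ≥0∞ :=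
  ⨆ ε : {ε : ℝ // 0 < ε}, Filter.limsup
    (fun n => ((widim X (fun x y : X => rhoMetricF α (F n) x.1 y.1) ε.1 : ℕ∞) : ℝ≥0∞) /
      ((F n).ncard : ℝ≥0∞)) atTop

/-- The canonical projection `π_F : K^G → K^F`. -/
def projTo {G K : Type*} (F : Set G) (x : G → K) : F → K := fun g => x g.1

/-- The tripod (cone over three points), realized as the subset of `ℝ³` of points with at most
one nonzero coordinate, each coordinate lying in `[0,1]`; the ℓ¹-distance on this set is exactly
the graph distance in which each of the three edges has length one. -/
def TripodSet : Set (Fin 3 → ℝ) :=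
  {x | (∀ i, x i ∈ Set.Icc (0 : ℝ) 1) ∧ ∀ i j : Fin 3, i ≠ j → x i = 0 ∨ x j = 0}

/-- The graph distance on the tripod (= the ℓ¹-distance of the ambient `ℝ³`). -/
noncomputable def tripodDist (x y : TripodSet) : ℝ := ∑ i, |x.1 i - y.1 i|

/-- The `l^∞`-distance on `P^n` for the tripod `P`. -/
noncomputable def tripodDistInf {n : ℕ} (x y : Fin n → TripodSet) : ℝ :=
  sSup (Set.range fun i => tripodDist (x i) (y i))



namespace BU

/-- mod 2 chains on lists of points -/
abbrev Ch (E : Type*) := List E →₀ ZMod 2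

section Alg
variable {E : Type*}

noncomputable def cone (b : E) : Ch E →ₗ[ZMod 2] Ch E :=
  Finsupp.lmapDomain (ZMod 2) (ZMod 2) (List.cons b)

noncomputable def bdL : List E → Ch E
  | [] => 0
  | b :: l => Finsupp.single l 1 + cone b (bdL l)

noncomputable def bd : Ch E →ₗ[ZMod 2] Ch E := Finsupp.linearCombination (ZMod 2) bdL

noncomputable def ev (φ : List E → ZMod 2) : Ch E →ₗ[ZMod 2] ZMod 2 :=
  Finsupp.linearCombination (ZMod 2) φ

@[simp] lemma cone_single (b : E) (l : List E) (a : ZMod 2) :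
    cone b (Finsupp.single l a) = Finsupp.single (b :: l) a := by
  simp [cone]

@[simp] lemma bd_single (l : List E) : bd (Finsupp.single l 1) = bdL l := by simp [bd]

@[simp] lemma ev_single (φ : List E → ZMod 2) (l : List E) :
    ev φ (Finsupp.single l 1) = φ l := by simp [ev]

lemma add_self_ch (c : Ch E) : c + c = 0 := by
  ext l; simp [CharTwo.add_self_eq_zero]

/-- supported chains -/
abbrev Sup (S : Set (List E)) : Submodule (ZMod 2) (Ch E) :=
  Finsupp.supported (ZMod 2) (ZMod 2) S

lemma single_mem {S : Set (List E)} {l : List E} (h : l ∈ S) :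
    (Finsupp.single l 1 : Ch E) ∈ Sup S := Finsupp.single_mem_supported _ _ h

lemma sup_ext {M : Type*} [AddCommGroup M] [Module (ZMod 2) M] {S : Set (List E)}
    (f g : Ch E →ₗ[ZMod 2] M) (h : ∀ l ∈ S, f (Finsupp.single l 1) = g (Finsupp.single l 1))
    {c : Ch E} (hc : c ∈ Sup S) : f c = g c := by
  rw [Sup, Finsupp.supported_eq_span_single] at hc
  induction hc using Submodule.span_induction with
  | mem x hx => obtain ⟨l, hl, rfl⟩ := hx; exact h l hl
  | zero => simp
  | add x y _ _ hx hy => simp [hx, hy]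
  | smul a x _ hx => simp [hx]

lemma sup_map {S : Set (List E)} (f : Ch E →ₗ[ZMod 2] Ch E) (p : Submodule (ZMod 2) (Ch E))
    (h : ∀ l ∈ S, f (Finsupp.single l 1) ∈ p) {c : Ch E} (hc : c ∈ Sup S) : f c ∈ p := by
  rw [Sup, Finsupp.supported_eq_span_single] at hc
  have : Submodule.span (ZMod 2) ((fun i => Finsupp.single i (1 : ZMod 2)) '' S) ≤ p.comap f := by
    rw [Submodule.span_le]
    rintro _ ⟨l, hl, rfl⟩
    exact h l hl
  exact this hc

lemma sup_univ (c : Ch E) : c ∈ Sup (Set.univ : Set (List E)) := by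
  simp [Sup]

lemma ext_all {M : Type*} [AddCommGroup M] [Module (ZMod 2) M]
    (f g : Ch E →ₗ[ZMod 2] M) (h : ∀ l, f (Finsupp.single l 1) = g (Finsupp.single l 1))
    (c : Ch E) : f c = g c := sup_ext f g (fun l _ => h l) (sup_univ c)

lemma bd_cone (b : E) (c : Ch E) : bd (cone b c) = c + cone b (bd c) := by
  refine ext_all (bd ∘ₗ cone b) (LinearMap.id + cone b ∘ₗ bd) ?_ c
  intro l
  simp [bdL]

lemma bd_bdL (l : List E) : bd (bdL l) = 0 := by
  induction l with
  | nil => simp [bdL]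
  | cons b l ih => simp [bdL, bd_cone, ih, add_self_ch]

lemma bd_bd (c : Ch E) : bd (bd c) = 0 := by
  refine ext_all (bd ∘ₗ bd) 0 ?_ c
  intro l; simp [bd_bdL]

lemma cone_sup {S S' : Set (List E)} (b : E) (h : ∀ l ∈ S, b :: l ∈ S') {c : Ch E}
    (hc : c ∈ Sup S) : cone b c ∈ Sup S' := by
  refine sup_map (cone b) (Sup S') ?_ hc
  intro l hl
  simpa using single_mem (h l hl)

lemma bdL_sup (l : List E) : bdL l ∈ Sup {l' : List E | l'.length + 1 = l.length ∧ l' ⊆ l} := by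
  induction l with
  | nil => simp [bdL]
  | cons b l ih =>
    rw [bdL]
    refine Submodule.add_mem _ (single_mem ⟨by simp, by simp⟩) ?_
    refine cone_sup b ?_ ih
    rintro l' ⟨h1, h2⟩
    refine ⟨by simp [h1], ?_⟩
    intro x hx
    rcases List.mem_cons.1 hx with rfl | hx
    · simp
    · exact List.mem_cons_of_mem _ (h2 hx)

section cup
variable (s : ℕ → E → ZMod 2)

def B : ℕ → List E → ZMod 2
  | _, [] => 0
  | _, [_] => 1
  | k, w0 :: w1 :: l => (s k w1 + s k w0) * B (k + 1) (w1 :: l)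

def al (k : ℕ) : List E → ZMod 2
  | [] => 0
  | w :: l => s k w * B s (k + 1) (w :: l)

lemma ev_B_cone (k : ℕ) (w : E) {c : Ch E} (hc : c ∈ Sup {l : List E | l ≠ []}) :
    ev (B s k) (cone w c) = ev (al s k) c + s k w * ev (B s (k + 1)) c := by
  refine sup_ext (ev (B s k) ∘ₗ cone w) (ev (al s k) + s k w • ev (B s (k + 1))) ?_ hc
  intro l hl
  cases l with
  | nil => simp at hl
  | cons a l => simp [B, al]; ring

lemma ev_al_cone (k : ℕ) (w : E) (c : Ch E) :
    ev (al s k) (cone w c) = s k w * ev (B s (k + 1)) (cone w c) := by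
  refine ext_all (ev (al s k) ∘ₗ cone w) (s k w • (ev (B s (k + 1)) ∘ₗ cone w)) ?_ c
  intro l
  simp [al]

lemma key (l : List E) : ∀ k, 2 ≤ l.length →
    ev (B s k) (bdL l) = 0 ∧ ev (al s k) (bdL l) = B s k l := by
  induction l with
  | nil => intro k h; simp at h
  | cons w l ih =>
    intro k h
    cases l with
    | nil => simp at h
    | cons a l =>
    cases l with
    | nil =>
      simp [bdL, B, al]
      exact CharTwo.add_self_eq_zero _
    | cons b l =>
      have hl : 2 ≤ (a :: b :: l).length := by simp
      have hne : bdL (a :: b :: l) ∈ Sup {l : List E | l ≠ []} := by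
        refine Finsupp.supported_mono ?_ (bdL_sup (a :: b :: l))
        rintro l' ⟨h1, -⟩ rfl
        simp at h1
      have hB : ∀ k, ev (B s k) (bdL (w :: a :: b :: l)) = 0 := by
        intro k
        rw [bdL, map_add, ev_single, ev_B_cone s k w hne, (ih k hl).2, (ih (k + 1) hl).1]
        simp [CharTwo.add_self_eq_zero]
      refine ⟨hB k, ?_⟩
      have h2 := hB (k + 1)
      rw [bdL, map_add, ev_single] at h2
      have h3 : ev (B s (k + 1)) (cone w (bdL (a :: b :: l))) = B s (k + 1) (a :: b :: l) := by
        have := CharTwo.add_eq_zero.1 h2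
        exact this.symm
      rw [bdL, map_add, ev_single, ev_al_cone, h3]
      conv_rhs => rw [B]
      rw [al]; ring

lemma ev_B_eq (k : ℕ) {c : Ch E} (hc : c ∈ Sup {l : List E | 2 ≤ l.length}) :
    ev (al s k) (bd c) = ev (B s k) c := by
  refine sup_ext (ev (al s k) ∘ₗ bd) (ev (B s k)) ?_ hc
  intro l hl
  simp [(key s l k hl).2]

lemma B_ne (l : List E) : ∀ k, B s k l ≠ 0 → ∀ i, i + 1 < l.length →
    ∃ u ∈ l, ∃ w ∈ l, s (k + i) u ≠ s (k + i) w := by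
  induction l with
  | nil => intro k h; simp [B] at h
  | cons w l ih =>
    intro k h i hi
    cases l with
    | nil => simp at hi
    | cons a l =>
      rw [B] at h
      have h1 := left_ne_zero_of_mul h
      have h2 := right_ne_zero_of_mul h
      cases i with
      | zero =>
        refine ⟨a, by simp, w, by simp, ?_⟩
        intro hh
        apply h1
        simp only [add_zero] at hh
        rw [hh]; exact CharTwo.add_self_eq_zero _
      | succ i =>
        obtain ⟨u, hu, v, hv, huv⟩ := ih (k + 1) h2 i (by simpa using hi)
        refine ⟨u, List.mem_cons_of_mem _ hu, v, List.mem_cons_of_mem _ hv, ?_⟩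
        rwa [show k + (i + 1) = k + 1 + i by ring]

end cup
end Alg

section Neg
variable {E : Type*} [AddCommGroup E]

noncomputable def T : Ch E →ₗ[ZMod 2] Ch E :=
  Finsupp.lmapDomain (ZMod 2) (ZMod 2) (List.map (fun v => -v))

@[simp] lemma T_single (l : List E) (a : ZMod 2) :
    T (Finsupp.single l a) = Finsupp.single (l.map (fun v => -v)) a := by
  simp [T]

lemma T_T (c : Ch E) : T (T c) = c := by
  refine ext_all (T ∘ₗ T) LinearMap.id ?_ c
  intro l
  simp

lemma T_cone (b : E) (c : Ch E) : T (cone b c) = cone (-b) (T c) := by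
  refine ext_all (T ∘ₗ cone b) (cone (-b) ∘ₗ T) ?_ c
  intro l
  simp

lemma bdL_map (l : List E) : bdL (l.map (fun v => -v)) = T (bdL l) := by
  induction l with
  | nil => simp [bdL]
  | cons b l ih => simp [bdL, T_cone, ih]

lemma bd_T (c : Ch E) : bd (T c) = T (bd c) := by
  have h : ∀ l : List E, (bd ∘ₗ T) (Finsupp.single l 1) = (T ∘ₗ bd) (Finsupp.single l 1) := by
    intro l
    rw [LinearMap.comp_apply, LinearMap.comp_apply, T_single, bd_single, bd_single, bdL_map]
  exact ext_all (bd ∘ₗ T) (T ∘ₗ bd) h c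

lemma T_sup {S S' : Set (List E)} (h : ∀ l ∈ S, l.map (fun v => -v) ∈ S') {c : Ch E}
    (hc : c ∈ Sup S) : T c ∈ Sup S' := by
  refine sup_map T (Sup S') ?_ hc
  intro l hl
  simpa using single_mem (h l hl)

variable (s : ℕ → E → ZMod 2)

lemma B_map (hs : ∀ k v, v ≠ 0 → s k (-v) = s k v + 1) (l : List E) (hl : ∀ v ∈ l, v ≠ 0) :
    ∀ k, B s k (l.map (fun v => -v)) = B s k l := by
  induction l with
  | nil => intro k; simp
  | cons w l ih =>
    intro k
    cases l with
    | nil => simp [B]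
    | cons a l =>
      have := ih (fun v hv => hl v (List.mem_cons_of_mem _ hv)) (k + 1)
      simp only [List.map_cons, B] at this ⊢
      rw [this, hs k a (hl a (by simp)), hs k w (hl w (by simp))]
      have h2 : (1 : ZMod 2) + 1 = 0 := by decide
      congr 1
      linear_combination h2

lemma ev_al_T (hs : ∀ k v, v ≠ 0 → s k (-v) = s k v + 1) (k : ℕ) {c : Ch E}
    (hc : c ∈ Sup {l : List E | l ≠ [] ∧ ∀ v ∈ l, v ≠ 0}) :
    ev (al s k) (c + T c) = ev (B s (k + 1)) c := by
  refine sup_ext (ev (al s k) ∘ₗ (LinearMap.id + T)) (ev (B s (k + 1))) ?_ hc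
  rintro l ⟨hl, h0⟩
  cases l with
  | nil => simp at hl
  | cons w l =>
    have := B_map s hs (w :: l) h0 (k + 1)
    simp only [List.map_cons] at this
    simp only [LinearMap.comp_apply, LinearMap.add_apply, LinearMap.id_apply, map_add, T_single,
      ev_single, List.map_cons, al, this, hs k w (h0 w (by simp))]
    have h2 : (1 : ZMod 2) + 1 = 0 := by decide
    linear_combination (s k w * B s (k + 1) (w :: l)) * h2

end Neg
end BU


namespace BU
section Sd
variable {E : Type*} [NormedAddCommGroup E] [NormedSpace ℝ E]

noncomputable def bary (l : List E) : E := (l.length : ℝ)⁻¹ • l.sum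

noncomputable def sd : ℕ → (Ch E →ₗ[ZMod 2] Ch E)
  | 0 => LinearMap.id
  | n + 1 => Finsupp.linearCombination (ZMod 2) (fun l => cone (bary l) (sd n (bdL l)))

lemma sd_zero (c : Ch E) : sd 0 c = c := rfl

lemma sd_succ_single (n : ℕ) (l : List E) :
    sd (n + 1) (Finsupp.single l 1) = cone (bary l) (sd n (bdL l)) := by
  simp [sd]

lemma bary_map (l : List E) : bary (l.map (fun v => -v)) = - bary l := by
  have : (l.map (fun v => -v)).sum = - l.sum := by
    induction l with
    | nil => simp
    | cons a l ih => simp [ih]; abel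
  simp [bary, this]

lemma sd_T (n : ℕ) : ∀ c : Ch E, sd n (T c) = T (sd n c) := by
  induction n with
  | zero => intro c; simp [sd_zero]
  | succ n ih =>
    intro c
    have h : ∀ l : List E, (sd (n + 1) ∘ₗ T) (Finsupp.single l 1) =
        (T ∘ₗ sd (n + 1)) (Finsupp.single l 1) := by
      intro l
      rw [LinearMap.comp_apply, LinearMap.comp_apply, T_single, sd_succ_single, sd_succ_single,
        bdL_map, ih, T_cone, bary_map]
    exact ext_all (sd (n + 1) ∘ₗ T) (T ∘ₗ sd (n + 1)) h c

lemma bd_sd (n : ℕ) : ∀ c : Ch E, c ∈ Sup {l : List E | l.length = n + 1} →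
    bd (sd (n + 1) c) = sd n (bd c) := by
  induction n with
  | zero =>
    intro c hc
    have h : ∀ l ∈ {l : List E | l.length = 0 + 1}, (bd ∘ₗ sd (0 + 1)) (Finsupp.single l 1) =
        (sd 0 ∘ₗ bd) (Finsupp.single l 1) := by
      intro l hl
      rw [LinearMap.comp_apply, LinearMap.comp_apply, sd_succ_single, bd_cone, bd_single]
      obtain ⟨a, rfl⟩ := List.length_eq_one_iff.1 hl
      simp [bdL, sd_zero]
    exact sup_ext (bd ∘ₗ sd (0 + 1)) (sd 0 ∘ₗ bd) h hc
  | succ n ih =>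
    intro c hc
    have h : ∀ l ∈ {l : List E | l.length = n + 1 + 1},
        (bd ∘ₗ sd (n + 1 + 1)) (Finsupp.single l 1) =
        (sd (n + 1) ∘ₗ bd) (Finsupp.single l 1) := by
      intro l hl
      rw [LinearMap.comp_apply, LinearMap.comp_apply, sd_succ_single, bd_cone, bd_single]
      rw [ih (bdL l) (Finsupp.supported_mono ?_ (bdL_sup l)), bd_bdL]
      · simp
      · rintro l' ⟨h1, -⟩
        simp only [Set.mem_ofPred_eq] at hl ⊢
        omega
    exact sup_ext (bd ∘ₗ sd (n + 1 + 1)) (sd (n + 1) ∘ₗ bd) h hc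

lemma norm_sum_sub (v : E) (δ : ℝ) (l : List E) (h : ∀ w ∈ l, ‖w - v‖ ≤ δ) :
    ‖l.sum - (l.length : ℝ) • v‖ ≤ l.length * δ := by
  induction l with
  | nil => simp
  | cons a l ih =>
    have h1 := ih (fun w hw => h w (List.mem_cons_of_mem _ hw))
    have h2 := h a (by simp)
    have : (a :: l).sum - ((a :: l).length : ℝ) • v = (a - v) + (l.sum - (l.length : ℝ) • v) := by
      simp only [List.sum_cons, List.length_cons, Nat.cast_add, Nat.cast_one, add_smul, one_smul]
      abel
    rw [this]
    refine (norm_add_le _ _).trans ?_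
    simp only [List.length_cons, Nat.cast_add, Nat.cast_one]
    linarith

lemma bary_dist (l : List E) (v : E) (hv : v ∈ l) (δ : ℝ) (hδ : 0 ≤ δ)
    (h : ∀ w ∈ l, dist w v ≤ δ) (M : ℕ) (hM : l.length ≤ M) :
    dist v (bary l) ≤ (1 - 1 / (M : ℝ)) * δ := by
  classical
  have hlen : 0 < l.length := List.length_pos_of_mem hv
  have hpos : (0 : ℝ) < l.length := by exact_mod_cast hlen
  have e1 : l.sum = v + (l.erase v).sum := (List.sum_erase hv).symm
  have e2 : ((l.erase v).length : ℝ) = l.length - 1 := by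
    rw [List.length_erase_of_mem hv, Nat.cast_sub hlen]; simp
  have h1 := norm_sum_sub v δ (l.erase v)
    (fun w hw => by rw [← dist_eq_norm]; exact h w (List.mem_of_mem_erase hw))
  rw [e2] at h1
  have e3 : bary l - v = (l.length : ℝ)⁻¹ • ((l.erase v).sum - ((l.length : ℝ) - 1) • v) := by
    rw [bary, e1]
    have : v = (l.length : ℝ)⁻¹ • ((l.length : ℝ) • v) := by
      rw [smul_smul, inv_mul_cancel₀ hpos.ne', one_smul]
    conv_lhs => rw [this]
    conv_lhs => rw [← this]
    rw [show v + (l.erase v).sum = (l.erase v).sum + v by abel]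
    conv_lhs => enter [2]; rw [this]
    rw [← smul_sub]
    congr 1
    rw [sub_smul, one_smul]; abel
  rw [dist_comm, dist_eq_norm, e3, norm_smul, norm_inv, Real.norm_of_nonneg hpos.le]
  have h2 : (l.length : ℝ)⁻¹ * ‖(l.erase v).sum - ((l.length : ℝ) - 1) • v‖ ≤
      (l.length : ℝ)⁻¹ * (((l.length : ℝ) - 1) * δ) := by gcongr
  refine h2.trans ?_
  have h3 : (l.length : ℝ)⁻¹ * (((l.length : ℝ) - 1) * δ) = (1 - 1 / (l.length : ℝ)) * δ := by
    field_simp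
  rw [h3]
  have : (1 : ℝ) / M ≤ 1 / l.length := by
    apply one_div_le_one_div_of_le hpos; exact_mod_cast hM
  gcongr

lemma bary_mem (Q : Set E) (hQ : Convex ℝ Q) (l : List E) (hne : l ≠ []) (h : ∀ v ∈ l, v ∈ Q) :
    bary l ∈ Q := by
  have key : ∀ l : List E, l ≠ [] → (∀ v ∈ l, v ∈ Q) → bary l ∈ Q := by
    intro l
    induction l with
    | nil => intro h; simp at h
    | cons a l ih =>
      intro _ h
      by_cases hl : l = []
      · subst hl; simpa [bary] using h
      · have h1 := ih hl (fun v hv => h v (List.mem_cons_of_mem _ hv))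
        have h2 := h a (by simp)
        have hpos : (0 : ℝ) < l.length := by exact_mod_cast List.length_pos_iff.2 hl
        have := hQ h2 h1 (a := ((l.length : ℝ) + 1)⁻¹) (b := ((l.length : ℝ) + 1)⁻¹ * l.length)
          (by positivity) (by positivity) (by field_simp; ring)
        have e : bary (a :: l) = ((l.length : ℝ) + 1)⁻¹ • a +
            (((l.length : ℝ) + 1)⁻¹ * l.length) • bary l := by
          simp only [bary, smul_smul, List.sum_cons, List.length_cons, Nat.cast_add, Nat.cast_one,
            smul_add]
          congr 2
          field_simp
        rwa [e]
  exact key l hne h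

lemma sd_supp (M : ℕ) (δ : ℝ) (hδ : 0 ≤ δ) (n : ℕ) : n ≤ M → ∀ (l : List E) (Q : Set E),
    Convex ℝ Q → l.length = n →
    (∀ v ∈ l, v ∈ Q) → (∀ v ∈ l, ∀ w ∈ l, dist v w ≤ δ) →
    sd n (Finsupp.single l 1) ∈ Sup {l' : List E | l'.length = n ∧ (∀ v ∈ l', v ∈ Q) ∧
      ∀ v ∈ l', ∀ w ∈ l', dist v w ≤ (1 - 1 / (M : ℝ)) * δ} := by
  induction n with
  | zero =>
    intro _ l Q _ hl _ _
    rw [sd_zero]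
    have : l = [] := List.length_eq_zero_iff.1 hl
    subst this
    exact single_mem (by simp)
  | succ n ih =>
    intro hnM l Q hQ hl hlQ hd
    rw [sd_succ_single]
    have hne : l ≠ [] := by rintro rfl; simp at hl
    have hM1 : (1 : ℝ) ≤ M := by exact_mod_cast (by omega : 1 ≤ M)
    have hc : 0 ≤ (1 - 1 / (M : ℝ)) * δ := by
      apply mul_nonneg _ hδ
      rw [sub_nonneg, div_le_one (by linarith)]
      exact hM1
    set Q' := Q ∩ Metric.closedBall (bary l) ((1 - 1 / (M : ℝ)) * δ) with hQ'
    have hQ'c : Convex ℝ Q' := hQ.inter (convex_closedBall _ _)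
    have hlQ' : ∀ v ∈ l, v ∈ Q' := fun v hv => ⟨hlQ v hv, by
      rw [Metric.mem_closedBall]
      exact bary_dist l v hv δ hδ (fun w hw => hd w hw v hv) M (by omega)⟩
    have h1 := sup_map (sd n) (Sup {l' : List E | l'.length = n ∧ (∀ v ∈ l', v ∈ Q') ∧
      ∀ v ∈ l', ∀ w ∈ l', dist v w ≤ (1 - 1 / (M : ℝ)) * δ}) (fun l' hl' => by
        obtain ⟨h1, h2⟩ := hl'
        exact ih (by omega) l' Q' hQ'c (by omega) (fun v hv => hlQ' v (h2 hv))
          (fun v hv w hw => hd v (h2 hv) w (h2 hw))) (bdL_sup l)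
    refine cone_sup _ ?_ h1
    rintro l' ⟨e1, e2, e3⟩
    refine ⟨by simp [e1], ?_, ?_⟩
    · intro v hv
      rcases List.mem_cons.1 hv with rfl | hv
      · exact bary_mem Q hQ l hne hlQ
      · exact (e2 v hv).1
    · intro v hv w hw
      rcases List.mem_cons.1 hv with rfl | hv <;> rcases List.mem_cons.1 hw with rfl | hw
      · simpa using hc
      · rw [dist_comm]; exact (e2 w hw).2
      · exact (e2 v hv).2
      · exact e3 v hv w hw

/-- good simplices -/
def GS (𝒬 : Set (Set E)) (n : ℕ) (δ : ℝ) : Set (List E) :=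
  {l | l.length = n ∧ (∃ Q ∈ 𝒬, ∀ v ∈ l, v ∈ Q) ∧ ∀ v ∈ l, ∀ w ∈ l, dist v w ≤ δ}

lemma sd_GS (𝒬 : Set (Set E)) (h𝒬 : ∀ Q ∈ 𝒬, Convex ℝ Q) (n : ℕ) (δ : ℝ) (hδ : 0 ≤ δ)
    {c : Ch E} (hc : c ∈ Sup (GS 𝒬 n δ)) : sd n c ∈ Sup (GS 𝒬 n ((1 - 1 / (n : ℝ)) * δ)) := by
  refine sup_map (sd n) _ ?_ hc
  rintro l ⟨h1, ⟨Q, hQ, h2⟩, h3⟩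
  refine Finsupp.supported_mono ?_ (sd_supp n δ hδ n le_rfl l Q (h𝒬 Q hQ) h1 h2 h3)
  rintro l' ⟨e1, e2, e3⟩
  exact ⟨e1, ⟨Q, hQ, e2⟩, e3⟩

lemma sd_iter_GS (𝒬 : Set (Set E)) (h𝒬 : ∀ Q ∈ 𝒬, Convex ℝ Q) (n : ℕ) (hn : 1 ≤ n) (δ : ℝ)
    (hδ : 0 ≤ δ) {c : Ch E} (hc : c ∈ Sup (GS 𝒬 n δ)) (r : ℕ) :
    (sd n)^[r] c ∈ Sup (GS 𝒬 n ((1 - 1 / (n : ℝ)) ^ r * δ)) := by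
  induction r with
  | zero => simpa using hc
  | succ r ih =>
    rw [Function.iterate_succ_apply', pow_succ', mul_assoc]
    have hc : 0 ≤ (1 - 1 / (n : ℝ)) := by
      have : (1 : ℝ) ≤ n := by exact_mod_cast hn
      rw [sub_nonneg, div_le_one (by linarith)]
      exact this
    exact sd_GS 𝒬 h𝒬 n _ (by positivity) ih

/-- hemisphere chains -/
noncomputable def hem (e : ℕ → E) : ℕ → Ch E
  | 0 => Finsupp.single [e 0] 1
  | j + 1 => cone (e (j + 1)) (hem e j + T (hem e j))

lemma bd_hem_T (e : ℕ → E) (j : ℕ) : bd (hem e j + T (hem e j)) = 0 := by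
  induction j with
  | zero =>
    simp only [hem, T_single, map_add, bd_single, List.map_cons, List.map_nil]
    simp [bdL, add_self_ch]
  | succ j ih =>
    rw [map_add, bd_T, hem, bd_cone, ih]
    simp only [map_zero, add_zero, map_add, T_T]
    rw [add_comm (T (hem e j)), add_self_ch]

lemma bd_hem (e : ℕ → E) (j : ℕ) : bd (hem e (j + 1)) = hem e j + T (hem e j) := by
  rw [hem, bd_cone, bd_hem_T]; simp

lemma hem_sup (e : ℕ → E) (j : ℕ) : hem e j ∈ Sup {l : List E | l.length = j + 1 ∧
    ∃ ε : ℕ → ℝ, (∀ i, ε i = 1 ∨ ε i = -1) ∧ ∀ v ∈ l, ∃ i ≤ j, v = ε i • e i} := by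
  induction j with
  | zero =>
    refine single_mem ⟨by simp, fun _ => 1, by simp, ?_⟩
    intro v hv
    exact ⟨0, le_rfl, by simpa using hv⟩
  | succ j ih =>
    rw [hem]
    refine cone_sup _ ?_ (Submodule.add_mem _ ih (T_sup ?_ ih))
    · rintro l ⟨h1, ε, h2, h3⟩
      refine ⟨by simp [h1], Function.update ε (j + 1) 1, ?_, ?_⟩
      · intro i
        by_cases hi : i = j + 1
        · subst hi; simp
        · simpa [Function.update_of_ne hi] using h2 i
      · intro v hv
        rcases List.mem_cons.1 hv with rfl | hv
        · exact ⟨j + 1, le_rfl, by simp⟩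
        · obtain ⟨i, hi, rfl⟩ := h3 v hv
          exact ⟨i, by omega, by rw [Function.update_of_ne (by omega)]⟩
    · rintro l ⟨h1, ε, h2, h3⟩
      refine ⟨by simp [h1], fun i => - ε i, ?_, ?_⟩
      · intro i
        rcases h2 i with h | h <;> simp [h]
      · intro v hv
        obtain ⟨w, hw, rfl⟩ := List.mem_map.1 hv
        obtain ⟨i, hi, rfl⟩ := h3 w hw
        exact ⟨i, hi, by simp⟩

lemma iter_T (n r : ℕ) (c : Ch E) : (sd n)^[r] (T c) = T ((sd n)^[r] c) := by
  induction r generalizing c with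
  | zero => simp
  | succ r ih => rw [Function.iterate_succ_apply, Function.iterate_succ_apply, sd_T, ih]

lemma iter_add (n r : ℕ) (c d : Ch E) :
    (sd n)^[r] (c + d) = (sd n)^[r] c + (sd n)^[r] d := by
  induction r generalizing c d with
  | zero => simp
  | succ r ih => simp only [Function.iterate_succ_apply, map_add, ih]

lemma sd_len (n : ℕ) {c : Ch E} (hc : c ∈ Sup {l : List E | l.length = n}) :
    sd n c ∈ Sup {l : List E | l.length = n} := by
  refine sup_map (sd n) _ ?_ hc
  intro l hl
  obtain ⟨δ, hδ0, hδ⟩ : ∃ δ : ℝ, 0 ≤ δ ∧ ∀ v ∈ l, ∀ w ∈ l, dist v w ≤ δ := by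
    have hb : Bornology.IsBounded {v : E | v ∈ l} := (List.finite_toSet l).isBounded
    refine ⟨Metric.diam {v : E | v ∈ l}, Metric.diam_nonneg, fun v hv w hw => ?_⟩
    exact Metric.dist_le_diam_of_mem hb hv hw
  refine Finsupp.supported_mono ?_
    (sd_supp n δ hδ0 n le_rfl l Set.univ convex_univ hl (by simp) hδ)
  rintro l' ⟨e1, -, -⟩
  exact e1

lemma iter_len (n r : ℕ) {c : Ch E} (hc : c ∈ Sup {l : List E | l.length = n}) :
    (sd n)^[r] c ∈ Sup {l : List E | l.length = n} := by
  induction r with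
  | zero => simpa using hc
  | succ r ih => rw [Function.iterate_succ_apply']; exact sd_len n ih

lemma bd_iter (n r : ℕ) {c : Ch E} (hc : c ∈ Sup {l : List E | l.length = n + 1}) :
    bd ((sd (n + 1))^[r] c) = (sd n)^[r] (bd c) := by
  induction r with
  | zero => simp
  | succ r ih =>
    rw [Function.iterate_succ_apply', Function.iterate_succ_apply', bd_sd n _ (iter_len _ r hc), ih]

lemma ev_iter_hem (e : ℕ → E) (s : ℕ → E → ZMod 2)
    (hs : ∀ k v, v ≠ 0 → s k (-v) = s k v + 1) (r m : ℕ)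
    (h0 : ∀ j ≤ m, (sd (j + 1))^[r] (hem e j) ∈ Sup {l : List E | ∀ v ∈ l, v ≠ 0}) :
    ∀ j ≤ m, ∀ k, ev (B s k) ((sd (j + 1))^[r] (hem e j)) = 1 := by
  have hlen : ∀ j, hem e j ∈ Sup {l : List E | l.length = j + 1} := fun j =>
    Finsupp.supported_mono (fun l hl => hl.1) (hem_sup e j)
  intro j
  induction j with
  | zero =>
    intro _ k
    have : (sd (0 + 1))^[r] (hem e 0) = hem e 0 := by
      induction r with
      | zero => rfl
      | succ r _ =>
        apply Function.iterate_fixed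
        rw [hem, sd_succ_single]
        simp [bdL, sd_zero, bary]
    rw [this, hem, ev_single, B]
  | succ j ih =>
    intro hj k
    have h2 := iter_len (j + 1 + 1) r (hlen (j + 1))
    rw [← ev_B_eq s k (Finsupp.supported_mono ?_ h2), bd_iter (j + 1) r (hlen (j + 1)), bd_hem,
      iter_add, iter_T, ev_al_T s hs k, ih (by omega)]
    · have h3 := h0 j (by omega)
      have h4 := iter_len (j + 1) r (hlen j)
      have := Submodule.mem_inf.2 ⟨h4, h3⟩
      rw [Sup, Sup, ← Finsupp.supported_inter] at this
      refine Finsupp.supported_mono ?_ this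
      rintro l ⟨e1, e2⟩
      refine ⟨?_, e2⟩
      rintro rfl
      simp at e1
    · intro l hl
      simp only [Set.mem_ofPred_eq] at hl ⊢
      omega

end Sd

section Final

def Dl {N : ℕ} (ε : ℕ → ℝ) : Set (Fin N → ℝ) :=
  {v | (∀ i : Fin N, 0 ≤ ε i * v i) ∧ ∑ i : Fin N, ε i * v i = 1}

lemma Dl_convex {N : ℕ} (ε : ℕ → ℝ) : Convex ℝ (Dl ε : Set (Fin N → ℝ)) := by
  rintro x ⟨hx1, hx2⟩ y ⟨hy1, hy2⟩ a b ha hb hab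
  refine ⟨fun i => ?_, ?_⟩
  · have := mul_nonneg ha (hx1 i)
    have := mul_nonneg hb (hy1 i)
    simp only [Pi.add_apply, Pi.smul_apply, smul_eq_mul]
    nlinarith
  · have : ∑ i : Fin N, ε i * (a • x + b • y) i =
        a * ∑ i : Fin N, ε i * x i + b * ∑ i : Fin N, ε i * y i := by
      rw [Finset.mul_sum, Finset.mul_sum, ← Finset.sum_add_distrib]
      refine Finset.sum_congr rfl fun i _ => ?_
      simp only [Pi.add_apply, Pi.smul_apply, smul_eq_mul]; ring
    rw [this, hx2, hy2]; linarith

lemma exists_tau (N : ℕ) : ∃ τ : (Fin N → ℝ) → ZMod 2, ∀ v, v ≠ 0 → τ (-v) = τ v + 1 := by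
  classical
  have h3 : (1 : ZMod 2) + 1 = 0 := by decide
  obtain ⟨p, hp⟩ : ∃ p : (Fin N → ℝ) → Prop, ∀ v, v ≠ 0 → (p (-v) ↔ ¬ p v) := by
    refine ⟨fun v => 0 < toLex v, fun v hv => ?_⟩
    have hv' : toLex v ≠ 0 := fun h => hv (by simpa using h)
    have h2 : toLex (-v) = - toLex v := rfl
    show 0 < toLex (-v) ↔ ¬ 0 < toLex v
    rw [h2, neg_pos]
    exact ⟨fun h => h.not_gt, fun h => (lt_or_gt_of_ne hv').resolve_right h⟩
  refine ⟨fun v => if p v then 1 else 0, fun v hv => ?_⟩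
  by_cases h : p v
  · simp [hp v hv, h, h3]
  · simp [hp v hv, h]

theorem borsuk_ulam (m : ℕ) (h : (Fin (m + 1) → ℝ) → (Fin m → ℝ))
    (hc : ContinuousOn h {0}ᶜ) (hodd : ∀ v, v ≠ 0 → h (-v) = - h v) :
    ∃ v, v ≠ 0 ∧ h v = 0 := by
  classical
  by_contra! hno
  set S1 : Set (Fin (m + 1) → ℝ) := {v | ∑ i, |v i| = 1} with hS1
  have hS1ne : ∀ v ∈ S1, v ≠ 0 := by
    rintro v hv rfl
    simp [hS1] at hv
  have hS1c : IsCompact S1 := by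
    refine Metric.isCompact_of_isClosed_isBounded ?_ ?_
    · exact isClosed_eq (by fun_prop) continuous_const
    · refine (Metric.isBounded_closedBall (x := (0 : Fin (m + 1) → ℝ)) (r := 1)).subset ?_
      intro v hv
      rw [mem_closedBall_zero_iff, pi_norm_le_iff_of_nonneg (by norm_num)]
      intro i
      rw [Real.norm_eq_abs, ← (show ∑ i, |v i| = 1 from hv)]
      exact Finset.single_le_sum (f := fun i => |v i|) (fun i _ => abs_nonneg _) (Finset.mem_univ i)
  have hcS : ContinuousOn h S1 := hc.mono (fun v hv => hS1ne v hv)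
  have hDlS : ∀ ε : ℕ → ℝ, (∀ i, ε i = 1 ∨ ε i = -1) → Dl ε ⊆ S1 := by
    rintro ε hε v ⟨h1, h2⟩
    rw [hS1, Set.mem_ofPred_eq, ← h2]
    refine Finset.sum_congr rfl fun i _ => ?_
    have := h1 i
    rcases hε i with h | h <;> rw [h] at this ⊢
    · rw [abs_of_nonneg (by linarith)]; ring
    · rw [abs_of_nonpos (by linarith)]; ring
  obtain ⟨v0, hv0, hmin⟩ := hS1c.exists_isMinOn (f := fun v => ‖h v‖)
    ⟨Pi.single 0 1, by
      simp only [hS1, Set.mem_ofPred_eq]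
      rw [Finset.sum_eq_single 0] <;> simp +contextual⟩ hcS.norm
  set μ := ‖h v0‖ with hμ
  have hμ0 : 0 < μ := norm_pos_iff.2 (hno v0 (hS1ne v0 hv0))
  have huc := hS1c.uniformContinuousOn_of_continuous hcS
  rw [Metric.uniformContinuousOn_iff] at huc
  obtain ⟨δ, hδ, hδ'⟩ := huc μ hμ0
  obtain ⟨τ, hτ⟩ := exists_tau (m + 1)
  set x : ℕ → (Fin (m + 1) → ℝ) → ℝ := fun i v => if hi : i < m then h v ⟨i, hi⟩ else 0 with hx
  have hxneg : ∀ i v, v ≠ 0 → x i (-v) = - x i v := by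
    intro i v hv
    simp only [hx]
    split_ifs with hi
    · rw [hodd v hv]; rfl
    · simp
  set s : ℕ → (Fin (m + 1) → ℝ) → ZMod 2 := fun i v =>
    if 0 < x i v then 1 else if x i v < 0 then 0 else τ v with hs
  have hsneg : ∀ k v, v ≠ 0 → s k (-v) = s k v + 1 := by
    intro k v hv
    have h3 : (1 : ZMod 2) + 1 = 0 := by decide
    simp only [hs, hxneg k v hv, hτ v hv, neg_pos, neg_lt_zero]
    rcases lt_trichotomy (x k v) 0 with h | h | h
    · simp [h, h.not_gt]
    · simp [h]
    · simp [h, h.not_gt, h3]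
  set e : ℕ → (Fin (m + 1) → ℝ) := fun i => if hi : i < m + 1 then Pi.single ⟨i, hi⟩ 1 else 0 with he
  set 𝒬 : Set (Set (Fin (m + 1) → ℝ)) := {Q | ∃ ε : ℕ → ℝ, (∀ i, ε i = 1 ∨ ε i = -1) ∧ Q = Dl ε}
    with h𝒬
  have h𝒬c : ∀ Q ∈ 𝒬, Convex ℝ Q := by
    rintro Q ⟨ε, -, rfl⟩; exact Dl_convex ε
  obtain ⟨δ0, hδ0, hdiam⟩ : ∃ δ0 : ℝ, 0 ≤ δ0 ∧ ∀ v ∈ S1, ∀ w ∈ S1, dist v w ≤ δ0 :=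
    ⟨Metric.diam S1, Metric.diam_nonneg, fun v hv w hw =>
      Metric.dist_le_diam_of_mem hS1c.isBounded hv hw⟩
  have hhem : ∀ j ≤ m, hem e j ∈ Sup (GS 𝒬 (j + 1) δ0) := by
    intro j hj
    refine Finsupp.supported_mono ?_ (hem_sup e j)
    rintro l ⟨h1, ε, h2, h3⟩
    have hD : ∀ v ∈ l, v ∈ Dl ε := by
      intro v hv
      obtain ⟨i, hi, rfl⟩ := h3 v hv
      have him : i < m + 1 := by omega
      have hsq : ε i * ε i = 1 := by rcases h2 i with h | h <;> rw [h] <;> norm_num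
      have e1 : ∀ k : Fin (m + 1), ε k * (ε i • e i) k = if k = ⟨i, him⟩ then 1 else 0 := by
        intro k
        simp only [he, dif_pos him, Pi.smul_apply, smul_eq_mul, Pi.single_apply]
        split_ifs with hk
        · subst hk; simpa using hsq
        · simp
      refine ⟨fun k => ?_, ?_⟩
      · rw [e1]; split_ifs <;> norm_num
      · rw [Finset.sum_congr rfl fun k _ => e1 k]; simp
    exact ⟨h1, ⟨Dl ε, ⟨ε, h2, rfl⟩, hD⟩, fun v hv w hw =>
      hdiam v (hDlS ε h2 (hD v hv)) w (hDlS ε h2 (hD w hw))⟩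
  have hr : ∃ r : ℕ, (1 - 1 / ((m + 1 : ℕ) : ℝ)) ^ r * δ0 < δ := by
    have h1 : (0 : ℝ) ≤ 1 - 1 / ((m + 1 : ℕ) : ℝ) := by
      rw [sub_nonneg, div_le_one (by positivity)]; push_cast; linarith [(Nat.cast_nonneg m : (0:ℝ) ≤ m)]
    have h2 : 1 - 1 / ((m + 1 : ℕ) : ℝ) < 1 := by
      have : (0 : ℝ) < 1 / ((m + 1 : ℕ) : ℝ) := by positivity
      linarith
    have h3 := (tendsto_pow_atTop_nhds_zero_of_lt_one h1 h2).mul_const δ0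
    rw [zero_mul] at h3
    exact (h3.eventually_lt_const hδ).exists
  obtain ⟨r, hr⟩ := hr
  have hGS : ∀ j ≤ m, (sd (j + 1))^[r] (hem e j) ∈
      Sup (GS 𝒬 (j + 1) ((1 - 1 / ((j + 1 : ℕ) : ℝ)) ^ r * δ0)) := fun j hj =>
    sd_iter_GS 𝒬 h𝒬c (j + 1) (by omega) δ0 hδ0 (hhem j hj) r
  have hev := ev_iter_hem e s hsneg r m (fun j hj => Finsupp.supported_mono (by
    rintro l ⟨-, ⟨Q, ⟨ε, hε, rfl⟩, hQ⟩, -⟩ v hv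
    exact hS1ne v (hDlS ε hε (hQ v hv))) (hGS j hj)) m le_rfl 0
  obtain ⟨l, hl, hB⟩ : ∃ l ∈ GS 𝒬 (m + 1) ((1 - 1 / ((m + 1 : ℕ) : ℝ)) ^ r * δ0), B s 0 l ≠ 0 := by
    by_contra! hcon
    have := sup_ext (ev (B s 0)) 0 (fun l hl => by simpa using hcon l hl) (hGS m le_rfl)
    rw [hev] at this
    simp at this
  obtain ⟨hlen, ⟨Q, ⟨ε, hε, rfl⟩, hQ⟩, hd⟩ := hl
  have hlS : ∀ v ∈ l, v ∈ S1 := fun v hv => hDlS ε hε (hQ v hv)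
  obtain ⟨v, hv⟩ : ∃ v, v ∈ l := by
    cases l with
    | nil => simp at hlen
    | cons a l => exact ⟨a, by simp⟩
  have hclose : ∀ u ∈ l, ∀ i, |h u i - h v i| < μ := by
    intro u hu i
    have := hδ' u (hlS u hu) v (hlS v hv) (lt_of_le_of_lt (hd u hu v hv) hr)
    rw [← Real.dist_eq]
    exact lt_of_le_of_lt (dist_le_pi_dist _ _ i) this
  have hlt : ‖h v‖ < μ := by
    rw [pi_norm_lt_iff hμ0]
    intro i
    obtain ⟨u, hu, w, hw, huw⟩ := B_ne s l 0 hB i (by omega)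
    have hxi : ∀ u, x i u = h u i := by
      intro u; simp [hx]
    simp only [hs, zero_add, hxi] at huw
    have h1 := hclose u hu i
    have h2 := hclose w hw i
    rw [abs_lt] at h1 h2
    rw [Real.norm_eq_abs, abs_lt]
    rcases lt_trichotomy (h u i) 0 with a | a | a <;> rcases lt_trichotomy (h w i) 0 with b | b | b
    · simp [a, b, a.not_gt, b.not_gt] at huw
    all_goals first
      | (simp [a, b, a.not_gt, b.not_gt] at huw; done)
      | (constructor <;> linarith)
  exact absurd (hmin (hlS v hv)) (not_le.2 hlt)

end Final
end BU


namespace TP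

noncomputable def cl (x : ℝ) : ℝ := max 0 (min 1 x)

lemma cl_mem (x : ℝ) : cl x ∈ Set.Icc (0 : ℝ) 1 := by
  refine ⟨le_max_left _ _, max_le zero_le_one (min_le_left _ _)⟩

lemma cl_nonpos {x : ℝ} (h : x ≤ 0) : cl x = 0 := by
  unfold cl; exact max_eq_left ((min_le_right _ _).trans h)

lemma cl_half {x : ℝ} (h : 1 / 2 ≤ x) : 1 / 2 ≤ cl x := by
  unfold cl; exact le_max_of_le_right (le_min (by norm_num) h)

lemma cl_cont : Continuous cl := by unfold cl; fun_prop

noncomputable def pv (a b : ℝ) : Fin 3 → ℝ :=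
  ![cl (a - max b 0), cl (b - max a 0), cl (0 - max a b)]

lemma pv_cont {X : Type*} [TopologicalSpace X] {f g : X → ℝ} (hf : Continuous f)
    (hg : Continuous g) : Continuous fun x => pv (f x) (g x) := by
  have := cl_cont
  refine continuous_pi fun i => ?_
  fin_cases i <;> simp only [pv] <;> simp <;> fun_prop

lemma pv_mem (a b : ℝ) : pv a b ∈ TripodSet := by
  refine ⟨fun i => ?_, fun i j hij => ?_⟩
  · fin_cases i <;> exact cl_mem _
  · have key : ∀ x y u v : ℝ, y ≤ u → x ≤ v → cl (x - u) = 0 ∨ cl (y - v) = 0 := by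
      intro x y u v h1 h2
      rcases le_total x y with h | h
      · exact Or.inl (cl_nonpos (by linarith))
      · exact Or.inr (cl_nonpos (by linarith))
    fin_cases i <;> fin_cases j <;> first | exact absurd rfl hij | skip
    all_goals
      apply key <;> first | exact le_max_left _ _ | exact le_max_right _ _

noncomputable def pt (a b : ℝ) : TripodSet := ⟨pv a b, pv_mem a b⟩

lemma pt_cont {X : Type*} [TopologicalSpace X] {f g : X → ℝ} (hf : Continuous f)
    (hg : Continuous g) : Continuous fun x => pt (f x) (g x) :=
  Continuous.subtype_mk (pv_cont hf hg) _

lemma pt_dist (a b : ℝ) (h : |a| = 1 ∨ |b| = 1) : 1 / 2 ≤ dist (pt a b) (pt (-a) (-b)) := by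
  have h0 : ∀ i, 1 / 2 ≤ |pv a b i - pv (-a) (-b) i| → 1 / 2 ≤ dist (pt a b) (pt (-a) (-b)) := by
    intro i hi
    refine hi.trans ?_
    rw [← Real.dist_eq]
    exact dist_le_pi_dist (pv a b) (pv (-a) (-b)) i
  have h1 : ∀ x y : ℝ, 1 / 2 ≤ x → y ≤ 0 → 1 / 2 ≤ |cl x - cl y| := by
    intro x y hx hy
    rw [cl_nonpos hy, sub_zero]
    exact (cl_half hx).trans (le_abs_self _)
  have h2 : ∀ x y : ℝ, 1 / 2 ≤ y → x ≤ 0 → 1 / 2 ≤ |cl x - cl y| := by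
    intro x y hx hy
    rw [abs_sub_comm]; exact h1 _ _ hx hy
  have hk : (a - max b 0 ≥ 1/2) ∨ (b - max a 0 ≥ 1/2) ∨ (0 - max a b ≥ 1/2) ∨
      (-a - max (-b) 0 ≥ 1/2) ∨ (-b - max (-a) 0 ≥ 1/2) ∨ (0 - max (-a) (-b) ≥ 1/2) := by
    have e : a = 1 ∨ a = -1 ∨ b = 1 ∨ b = -1 := by
      rcases h with h | h
      · rcases (abs_eq (by norm_num)).1 h with h | h <;> simp [h]
      · rcases (abs_eq (by norm_num)).1 h with h | h <;> simp [h]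
    grind
  have m1 := le_max_left a b
  have m2 := le_max_right a b
  have m3 := le_max_left a 0
  have m4 := le_max_right a 0
  have m5 := le_max_left b 0
  have m6 := le_max_right b 0
  have m1' := le_max_left (-a) (-b)
  have m2' := le_max_right (-a) (-b)
  have m3' := le_max_left (-a) 0
  have m4' := le_max_right (-a) 0
  have m5' := le_max_left (-b) 0
  have m6' := le_max_right (-b) 0
  rcases hk with hk | hk | hk | hk | hk | hk
  · exact h0 0 (h1 _ _ hk (by linarith))
  · exact h0 1 (h1 _ _ hk (by linarith))
  · exact h0 2 (h1 _ _ hk (by linarith))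
  · exact h0 0 (h2 _ _ hk (by linarith))
  · exact h0 1 (h2 _ _ hk (by linarith))
  · exact h0 2 (h2 _ _ hk (by linarith))

/-- topological lemma -/
theorem TL (J : Type*) [Fintype J] (q : ℕ) (hq : q < 2 * Fintype.card J)
    (Φ : (J → TripodSet) → (Fin q → ℝ)) (hΦ : Continuous Φ) :
    ∃ y y', Φ y = Φ y' ∧ ∃ j, 1 / 2 ≤ dist (y j) (y' j) := by
  classical
  obtain ⟨m, hm⟩ : ∃ m, 2 * Fintype.card J = m + 1 := ⟨2 * Fintype.card J - 1, by omega⟩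
  have hcard : Fintype.card (J × Bool) = m + 1 := by
    rw [Fintype.card_prod, Fintype.card_bool]; omega
  let e : J × Bool ≃ Fin (m + 1) := Fintype.equivFinOfCardEq hcard
  let Y : (Fin (m + 1) → ℝ) → (J → TripodSet) := fun v j => pt (v (e (j, true))) (v (e (j, false)))
  have hY : Continuous Y := continuous_pi fun j => pt_cont (by fun_prop) (by fun_prop)
  let u : (Fin (m + 1) → ℝ) → (Fin (m + 1) → ℝ) := fun v => ‖v‖⁻¹ • v
  have hu : ContinuousOn u {0}ᶜ := by
    refine ContinuousOn.smul (ContinuousOn.inv₀ continuous_norm.continuousOn ?_) continuousOn_id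
    intro v hv
    exact norm_ne_zero_iff.2 hv
  have hun : ∀ v, u (-v) = - u v := by intro v; simp [u]
  let h : (Fin (m + 1) → ℝ) → (Fin m → ℝ) := fun v i =>
    if hi : i.1 < q then Φ (Y (u v)) ⟨i, hi⟩ - Φ (Y (-(u v))) ⟨i, hi⟩ else 0
  have hc : ContinuousOn h {0}ᶜ := by
    refine continuousOn_pi.2 fun i => ?_
    by_cases hi : i.1 < q
    · simp only [h, dif_pos hi]
      have hg : Continuous fun v => Φ (Y v) ⟨i, hi⟩ - Φ (Y (-v)) ⟨i, hi⟩ := by fun_prop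
      exact hg.comp_continuousOn hu
    · simp only [h, dif_neg hi]; exact continuousOn_const
  obtain ⟨v, hv, hv0⟩ := BU.borsuk_ulam m h hc (by
    intro v _
    ext i
    simp only [h, hun, Pi.neg_apply, neg_neg]
    split_ifs <;> simp)
  refine ⟨Y (u v), Y (-(u v)), ?_, ?_⟩
  · ext i
    have := congrFun hv0 ⟨i, by omega⟩
    simp only [h, dif_pos i.2, Pi.zero_apply] at this
    linarith
  · have hn : ‖u v‖ = 1 := by
      simp only [u, norm_smul, norm_inv, norm_norm]
      exact inv_mul_cancel₀ (norm_ne_zero_iff.2 hv)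
    obtain ⟨i, hi⟩ : ∃ i, |u v i| = 1 := by
      obtain ⟨i, -, hi⟩ := Finset.exists_max_image Finset.univ (fun i => |u v i|)
        ⟨0, Finset.mem_univ _⟩
      refine ⟨i, le_antisymm ?_ ?_⟩
      · rw [← hn, ← Real.norm_eq_abs]; exact norm_le_pi_norm _ _
      · rw [← hn, pi_norm_le_iff_of_nonneg (abs_nonneg _)]
        intro j; exact hi j (Finset.mem_univ _)
    refine ⟨(e.symm i).1, pt_dist _ _ ?_⟩
    rcases hb : (e.symm i).2 with _ | _
    · right
      rw [← hb]; simpa using hi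
    · left
      rw [← hb]; simpa using hi

/-- generic projection -/
theorem proj_exists {ι : Type*} [Finite ι] [Nonempty ι] (r : ℕ) (n : ℕ) :
    ∀ (E : Type) [AddCommGroup E] [Module ℝ E] [FiniteDimensional ℝ E],
    Module.finrank ℝ E = n → ∀ V : ι → Submodule ℝ E, (∀ i, Module.finrank ℝ (V i) ≤ r) →
    ∃ L : E →ₗ[ℝ] (Fin r → ℝ), ∀ i, ∀ x ∈ V i, L x = 0 → x = 0 := by
  induction n with
  | zero =>
    intro E _ _ _ hE V hV
    refine ⟨0, fun i x _ _ => ?_⟩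
    have := Module.finrank_zero_iff.1 hE
    exact Subsingleton.elim _ _
  | succ n ih =>
    intro E _ _ _ hE V hV
    by_cases hr : n + 1 ≤ r
    · let b := (Module.finBasisOfFinrankEq ℝ E hE).equivFun
      have hsurj := Function.invFun_surjective (Fin.castLE_injective hr)
      let L : E →ₗ[ℝ] (Fin r → ℝ) := LinearMap.funLeft ℝ ℝ (Function.invFun (Fin.castLE hr)) ∘ₗ
        b.toLinearMap
      have hL : Function.Injective L :=
        (LinearMap.funLeft_injective_of_surjective ℝ ℝ _ hsurj).comp b.injective
      exact ⟨L, fun i x _ hx => (injective_iff_map_eq_zero L).1 hL x hx⟩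
    · have hV' : ∀ i, V i ≠ ⊤ := by
        intro i hi
        have := hV i
        rw [hi, finrank_top, hE] at this
        exact hr this
      obtain ⟨v, hv⟩ : ∃ v, ∀ i, v ∉ V i := by
        by_contra! hcon
        obtain ⟨i, hi⟩ := Subspace.exists_eq_top_of_iUnion_eq_univ (p := V) (by
          ext x; simpa using hcon x)
        exact hV' i hi
      have hv0 : v ≠ 0 := by
        rintro rfl
        exact hv (Classical.arbitrary ι) (Submodule.zero_mem _)
      let W := Submodule.span ℝ {v}
      have hfr : Module.finrank ℝ (E ⧸ W) = n := by
        have h1 := Submodule.finrank_quotient_add_finrank W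
        have h2 : Module.finrank ℝ W = 1 := finrank_span_singleton hv0
        omega
      obtain ⟨L, hL⟩ := ih (E ⧸ W) hfr (fun i => (V i).map W.mkQ) (fun i =>
        (Submodule.finrank_map_le _ _).trans (hV i))
      refine ⟨L ∘ₗ W.mkQ, fun i x hx hx0 => ?_⟩
      have := hL i (W.mkQ x) ⟨x, hx, rfl⟩ hx0
      rw [Submodule.mkQ_apply, Submodule.Quotient.mk_eq_zero] at this
      obtain ⟨c, rfl⟩ := Submodule.mem_span_singleton.1 this
      by_cases hc : c = 0
      · simp [hc]
      · exact absurd ((Submodule.smul_mem_iff _ hc).1 hx) (hv i)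

theorem widim_euclid {X : Type*} [TopologicalSpace X] {ρ : X → X → ℝ} {ε : ℝ} {k : ℕ}
    (h : WidimLE X ρ ε k) : ∃ g : X → (Fin (2 * k + 1) → ℝ), Continuous g ∧
      ∀ x y, g x = g y → ρ x y < ε := by
  classical
  obtain ⟨N, P, hfin, hcard, f, hfc, hf⟩ := h
  have := hfin.to_subtype
  let V : Option (P.faces × P.faces) → Submodule ℝ (Fin N → ℝ) := fun o => match o with
    | none => ⊥
    | some st => vectorSpan ℝ ((st.1.1 ∪ st.2.1 : Finset (Fin N → ℝ)) : Set (Fin N → ℝ))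
  obtain ⟨L, hL⟩ := proj_exists (2 * k + 1) _ (Fin N → ℝ) rfl V (by
    rintro (_ | ⟨s, t⟩)
    · simp [V]
    · have h1 := hcard s.1 s.2
      have h2 := hcard t.1 t.2
      have h3 := Finset.card_union_le s.1 t.1
      have hs : (s.1 : Finset (Fin N → ℝ)).Nonempty := P.nonempty_of_mem_faces s.2
      have h4 : 0 < (s.1 ∪ t.1).card := Finset.card_pos.2 (hs.mono Finset.subset_union_left)
      have := finrank_vectorSpan_image_finset_le ℝ (id : (Fin N → ℝ) → _) (s.1 ∪ t.1)
        (n := (s.1 ∪ t.1).card - 1) (by omega)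
      rw [Finset.image_id] at this
      exact le_trans this (by omega))
  refine ⟨fun x => L (f x).1, ?_, ?_⟩
  · exact L.continuous_of_finiteDimensional.comp (continuous_subtype_val.comp hfc)
  · intro x y hxy
    apply hf
    obtain ⟨s, hs, hxs⟩ := P.mem_space_iff.1 (f x).2
    obtain ⟨t, ht, hyt⟩ := P.mem_space_iff.1 (f y).2
    apply Subtype.ext
    rw [← sub_eq_zero]
    refine hL (some (⟨s, hs⟩, ⟨t, ht⟩)) _ ?_ (by simpa [sub_eq_zero] using hxy)
    show _ ∈ vectorSpan ℝ _
    have hx' := convexHull_subset_affineSpan (𝕜 := ℝ) _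
      (convexHull_mono (Finset.coe_subset.2 (Finset.subset_union_left (s₂ := t))) hxs)
    have hy' := convexHull_subset_affineSpan (𝕜 := ℝ) _
      (convexHull_mono (Finset.coe_subset.2 (Finset.subset_union_right (s₁ := s))) hyt)
    have := AffineSubspace.vsub_mem_direction hx' hy'
    rwa [direction_affineSpan] at this

theorem widim_lower {X : Type*} [TopologicalSpace X] {ρ : X → X → ℝ} {ε : ℝ} {k : ℕ}
    (h : WidimLE X ρ ε k) {J : Type*} [Fintype J] (ψ : (J → TripodSet) → X) (hψ : Continuous ψ)
    (hd : ∀ y y', (∃ j, 1 / 2 ≤ dist (y j) (y' j)) → ε ≤ ρ (ψ y) (ψ y')) :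
    Fintype.card J ≤ k := by
  by_contra hk
  obtain ⟨g, hg, hg'⟩ := widim_euclid h
  obtain ⟨y, y', h1, h2⟩ := TL J (2 * k + 1) (by omega) (g ∘ ψ) (hg.comp hψ)
  exact absurd (hg' _ _ h1) (not_lt.2 (hd y y' h2))

end TP


namespace ZD

def pick (a b : Fin 3) : Fin 3 :=
  if a ≠ 0 ∧ b ≠ 0 then 0 else if a ≠ 1 ∧ b ≠ 1 then 1 else 2

lemma pick_ne : ∀ a b : Fin 3, pick a b ≠ a ∧ pick a b ≠ b := by decide

noncomputable def col {G : Type} [Group G] (e : G → ℕ) (s : G) (h : G) : Fin 3 :=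
  pick (if _hh : e (s * h) < e h then col e s (s * h) else 0)
    (if _hh : e (s⁻¹ * h) < e h then col e s (s⁻¹ * h) else 0)
termination_by e h

lemma col_ne {G : Type} [Group G] (e : G → ℕ) (he : Function.Injective e) (s : G) (hs : s ≠ 1)
    (h : G) : col e s (s * h) ≠ col e s h := by
  rcases lt_trichotomy (e (s * h)) (e h) with h1 | h1 | h1
  · rw [col.eq_1 e s h, dif_pos h1]
    exact (pick_ne _ _).1.symm
  · exact absurd (he h1) (by simpa using hs)
  · rw [col.eq_1 e s (s * h), inv_mul_cancel_left, dif_pos h1]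
    exact (pick_ne _ _).2

def act {G : Type} [Group G] (g : G) (z : G → G → Fin 3) : G → G → Fin 3 :=
  fun s h => z s (h * g)

lemma act_cont {G : Type} [Group G] (g : G) : Continuous (act g) := by
  unfold act; fun_prop

lemma act_mul {G : Type} [Group G] (g g' : G) (z : G → G → Fin 3) :
    act (g * g') z = act g (act g' z) := by
  funext s h; simp [act, mul_assoc]

lemma act_one {G : Type} [Group G] (z : G → G → Fin 3) : act 1 z = z := by
  funext s h; simp [act]

theorem exists_Z (G : Type) [Group G] [Countable G] :
    ∃ (Z : Type) (_ : TopologicalSpace Z) (_ : MulAction G Z),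
      CompactSpace Z ∧ T2Space Z ∧ SecondCountableTopology Z ∧ TotallyDisconnectedSpace Z ∧
      Nonempty Z ∧ ContinuousConstSMul G Z ∧ (∀ (g : G) (z : Z), g • z = z → g = 1) ∧
      MulAction.IsMinimal G Z := by
  classical
  obtain ⟨e, he⟩ := exists_injective_nat G
  let Z0 : Set (G → G → Fin 3) := {z | ∀ s ≠ 1, ∀ h, z s (s * h) ≠ z s h}
  have hZ0c : IsClosed Z0 := by
    have : Z0 = ⋂ s : G, ⋂ _ : s ≠ 1, ⋂ h : G, {z | z s (s * h) ≠ z s h} := by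
      ext z; simp [Z0]
    rw [this]
    refine isClosed_iInter fun s => isClosed_iInter fun _ => isClosed_iInter fun h => ?_
    have hc : Continuous fun z : G → G → Fin 3 => (z s (s * h), z s h) := by fun_prop
    exact (isClosed_discrete {p : Fin 3 × Fin 3 | p.1 ≠ p.2}).preimage hc
  let 𝒮 : Set (Set (G → G → Fin 3)) := {S | S ⊆ Z0 ∧ IsClosed S ∧ S.Nonempty ∧
    ∀ g, ∀ z ∈ S, act g z ∈ S}
  have hZ0 : Z0 ∈ 𝒮 := by
    refine ⟨subset_rfl, hZ0c, ⟨col e, fun s hs h => col_ne e he s hs h⟩, ?_⟩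
    intro g z hz s hs h
    simp only [act, mul_assoc]
    exact hz s hs (h * g)
  obtain ⟨S, hS⟩ : ∃ S, Minimal (· ∈ 𝒮) S := by
    refine zorn_superset 𝒮 ?_
    intro c hc hch
    rcases c.eq_empty_or_nonempty with rfl | hne
    · exact ⟨Z0, hZ0, by simp⟩
    · refine ⟨⋂₀ c, ⟨?_, ?_, ?_, ?_⟩, fun s hs => sInter_subset_of_mem hs⟩
      · obtain ⟨s, hs⟩ := hne
        exact (sInter_subset_of_mem hs).trans (hc hs).1
      · exact isClosed_sInter fun s hs => (hc hs).2.1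
      · have : Nonempty c := hne.to_subtype
        refine IsCompact.nonempty_sInter_of_directed_nonempty_isCompact_isClosed ?_ ?_ ?_ ?_
        · intro a ha b hb
          rcases hch.total ha hb with h | h
          · exact ⟨a, ha, subset_rfl, h⟩
          · exact ⟨b, hb, h, subset_rfl⟩
        · exact fun s hs => (hc hs).2.2.1
        · exact fun s hs => (hc hs).2.1.isCompact
        · exact fun s hs => (hc hs).2.1
      · intro g z hz s hs
        exact (hc hs).2.2.2 g z (hz s hs)
  obtain ⟨⟨hSZ, hScl, hSne, hSinv⟩, hSmin⟩ := hS
  let ma : MulAction G S :=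
    { smul := fun g z => ⟨act g z.1, hSinv g z.1 z.2⟩
      one_smul := fun z => Subtype.ext (act_one z.1)
      mul_smul := fun g g' z => Subtype.ext (act_mul g g' z.1) }
  have hcc : CompactSpace S := isCompact_iff_compactSpace.1 hScl.isCompact
  have hcont : ContinuousConstSMul G S :=
    ⟨fun g => Continuous.subtype_mk ((act_cont g).comp continuous_subtype_val) _⟩
  refine ⟨S, inferInstance, ma, hcc, inferInstance, inferInstance, inferInstance,
    hSne.to_subtype, hcont, ?_, ?_⟩
  · intro g z hgz
    by_contra hg
    have h1 : act g z.1 = z.1 := congrArg Subtype.val hgz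
    have h2 := congrFun (congrFun h1 g) 1
    have h3 := hSZ z.2 g hg 1
    simp only [act, one_mul, mul_one] at h2 h3
    exact h3 h2
  · refine ⟨fun z => ?_⟩
    let C : Set S := closure (MulAction.orbit G z)
    have hCinv : ∀ g : G, ∀ w ∈ C, g • w ∈ C := by
      intro g w hw
      have := (continuous_const_smul g).continuousOn.image_closure (f := fun w : S => g • w)
        (s := MulAction.orbit G z) 
      have h2 := this (mem_image_of_mem _ hw)
      refine closure_mono ?_ h2
      rintro _ ⟨_, ⟨g', rfl⟩, rfl⟩
      exact ⟨g * g', mul_smul _ _ _⟩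
    have h𝒮 : Subtype.val '' C ∈ 𝒮 := by
      refine ⟨?_, ?_, ?_, ?_⟩
      · rintro _ ⟨w, -, rfl⟩; exact hSZ w.2
      · exact hScl.isClosedEmbedding_subtypeVal.isClosedMap _ isClosed_closure
      · exact ⟨z.1, z, subset_closure ⟨1, one_smul _ _⟩, rfl⟩
      · rintro g _ ⟨w, hw, rfl⟩
        exact ⟨g • w, hCinv g w hw, rfl⟩
    have := hSmin h𝒮 (by rintro _ ⟨w, -, rfl⟩; exact w.2)
    intro w
    obtain ⟨w', hw', hww⟩ := this w.2
    have : w' = w := Subtype.ext hww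
    rwa [← this]

end ZD


namespace DN

section basic
variable {G : Type} [Group G] {Z : Type} [MulAction G Z]

open Classical in
/-- number of visits -/
noncomputable def vis (F : Finset G) (C : Set Z) (z : Z) : ℕ :=
  (F.filter (fun h => h • z ∈ C)).card

noncomputable def mv (F : Finset G) (C : Set Z) : ℕ := ⨆ z, vis F C z

noncomputable def D (G : Type) [Group G] {Z : Type} [MulAction G Z] (C : Set Z) : ℝ :=
  ⨅ F : {F : Finset G // F.Nonempty}, (mv F.1 C : ℝ) / F.1.card

lemma vis_le (F : Finset G) (C : Set Z) (z : Z) : vis F C z ≤ F.card := by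
  classical exact Finset.card_filter_le _ _

lemma vis_bdd (F : Finset G) (C : Set Z) : BddAbove (Set.range (vis F C)) := by
  refine ⟨F.card, ?_⟩
  rintro _ ⟨z, rfl⟩
  exact vis_le F C z

lemma vis_le_mv (F : Finset G) (C : Set Z) (z : Z) : vis F C z ≤ mv F C := le_ciSup (vis_bdd F C) z

lemma exists_mv [Nonempty Z] (F : Finset G) (C : Set Z) : ∃ z, vis F C z = mv F C := by
  have := Nat.sSup_mem (Set.range_nonempty (vis F C)) (vis_bdd F C)
  exact this

lemma mv_le [Nonempty Z] (F : Finset G) (C : Set Z) (n : ℕ) (h : ∀ z, vis F C z ≤ n) :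
    mv F C ≤ n := by
  obtain ⟨z, hz⟩ := exists_mv F C
  rw [← hz]; exact h z

lemma vis_mono (F : Finset G) {C C' : Set Z} (h : C ⊆ C') (z : Z) : vis F C z ≤ vis F C' z := by
  classical
  refine Finset.card_le_card ?_
  intro g hg
  rw [Finset.mem_filter] at hg ⊢
  exact ⟨hg.1, h hg.2⟩

lemma vis_union (F : Finset G) (C C' : Set Z) (z : Z) :
    vis F (C ∪ C') z ≤ vis F C z + vis F C' z := by
  classical
  unfold vis
  refine le_trans (Finset.card_le_card ?_) (Finset.card_union_le _ _)
  intro g hg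
  simp only [Finset.mem_filter] at hg
  rw [Finset.mem_union, Finset.mem_filter, Finset.mem_filter]
  rcases hg.2 with h | h
  · exact Or.inl ⟨hg.1, h⟩
  · exact Or.inr ⟨hg.1, h⟩

lemma vis_le_add (F F' : Finset G) (C : Set Z) (z : Z) [DecidableEq G] :
    vis F' C z ≤ vis F C z + (F' \ F).card := by
  classical
  unfold vis
  refine le_trans (Finset.card_le_card ?_) (Finset.card_union_le _ _)
  intro g hg
  rw [Finset.mem_filter] at hg
  rw [Finset.mem_union, Finset.mem_filter, Finset.mem_sdiff]
  by_cases h : g ∈ F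
  · exact Or.inl ⟨h, hg.2⟩
  · exact Or.inr ⟨hg.1, h⟩

lemma D_bdd (C : Set Z) : BddBelow (Set.range fun F : {F : Finset G // F.Nonempty} =>
    (mv F.1 C : ℝ) / F.1.card) := by
  refine ⟨0, ?_⟩
  rintro _ ⟨F, rfl⟩
  positivity

instance : Nonempty {F : Finset G // F.Nonempty} := ⟨⟨{1}, by simp⟩⟩

lemma D_le (C : Set Z) (F : Finset G) (hF : F.Nonempty) : D G C ≤ (mv F C : ℝ) / F.card :=
  ciInf_le (D_bdd C) ⟨F, hF⟩

lemma D_mul_le (C : Set Z) (F : Finset G) : D G C * F.card ≤ mv F C := by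
  rcases F.eq_empty_or_nonempty with rfl | hF
  · simp
  · have := D_le C F hF
    rwa [le_div_iff₀ (by exact_mod_cast hF.card_pos)] at this

lemma D_le_of [Nonempty Z] (C : Set Z) (F : Finset G) (hF : F.Nonempty) (a : ℝ)
    (h : ∀ z, (vis F C z : ℝ) ≤ a * F.card) : D G C ≤ a := by
  refine (D_le C F hF).trans ?_
  obtain ⟨z, hz⟩ := exists_mv F C
  rw [div_le_iff₀ (by exact_mod_cast hF.card_pos), ← hz]
  exact h z

lemma D_mono [Nonempty Z] {C C' : Set Z} (h : C ⊆ C') : D G C ≤ D G C' := by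
  refine le_ciInf fun F => D_le_of C F.1 F.2 _ fun z => ?_
  have hpos : (0 : ℝ) < F.1.card := by exact_mod_cast F.2.card_pos
  rw [div_mul_cancel₀ _ hpos.ne']
  exact_mod_cast (vis_mono F.1 h z).trans (vis_le_mv _ _ _)

lemma one_le_D_univ [Nonempty Z] : 1 ≤ D G (Set.univ : Set Z) := by
  refine le_ciInf fun F => ?_
  have hpos : (0 : ℝ) < F.1.card := by exact_mod_cast F.2.card_pos
  rw [le_div_iff₀ hpos, one_mul]
  have : vis F.1 (Set.univ : Set Z) (Classical.arbitrary Z) = F.1.card := by simp [vis]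
  rw [← this]
  exact_mod_cast vis_le_mv _ _ _

end basic

/-- Finset Folner sequences -/
def Fol {G : Type} [Group G] [DecidableEq G] (F : ℕ → Finset G) : Prop :=
  (∀ n, (F n).Nonempty) ∧ ∀ g : G,
    Tendsto (fun n => ((F n \ (F n).image (fun x => g * x)).card : ℝ) / ((F n).card : ℝ))
      atTop (𝓝 0)

lemma Fol_of {G : Type} [Group G] [DecidableEq G] {F : ℕ → Set G} (hF : IsFolnerSeq F) :
    ∃ F' : ℕ → Finset G, (∀ n, (F' n : Set G) = F n) ∧ Fol F' := by
  obtain ⟨h1, h2⟩ := hF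
  choose F' hF' using fun n => (h1 n).1.exists_finset_coe
  refine ⟨F', hF', fun n => ?_, fun g => ?_⟩
  · rw [← Finset.coe_nonempty, hF']; exact (h1 n).2
  · refine squeeze_zero (fun n => by positivity) (fun n => ?_) (h2 g)
    rw [← hF' n, Set.ncard_coe_finset]
    gcongr
    rw [← Set.ncard_coe_finset]
    refine Set.ncard_le_ncard ?_ ?_
    · rw [Finset.coe_sdiff, Finset.coe_image]
      exact Set.subset_union_left
    · exact ((F' n).finite_toSet.union ((F' n).finite_toSet.image _)).subset
        Set.symmDiff_subset_union

section fol
variable {G : Type} [Group G] [DecidableEq G] {Z : Type} [MulAction G Z]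

lemma Fol_right {F : ℕ → Finset G} (hF : Fol F) (g : G) :
    Tendsto (fun n => (((F n).image (fun x => g * x) \ F n).card : ℝ) / ((F n).card : ℝ))
      atTop (𝓝 0) := by
  have := hF.2 g
  refine this.congr fun n => ?_
  rw [Finset.card_sdiff_comm]
  rw [Finset.card_image_of_injective _ (mul_right_injective g)]

open Pointwise in
lemma Fol_mul {F : ℕ → Finset G} (hF : Fol F) (W : Finset G) :
    Tendsto (fun n => ((W * F n) \ F n).card / ((F n).card : ℝ)) atTop (𝓝 0) := by
  have h := tendsto_finsetSum W (fun g _ => Fol_right hF g)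
  simp only [Finset.sum_const_zero] at h
  refine squeeze_zero (fun n => by positivity) (fun n => ?_) h
  rw [← Finset.sum_div]
  gcongr
  have : (W * F n) \ F n ⊆ W.biUnion (fun g => (F n).image (fun x => g * x) \ F n) := by
    intro x hx
    obtain ⟨hx1, hx2⟩ := Finset.mem_sdiff.1 hx
    obtain ⟨w, hw, f, hf, rfl⟩ := Finset.mem_mul.1 hx1
    exact Finset.mem_biUnion.2 ⟨w, hw, Finset.mem_sdiff.2 ⟨Finset.mem_image_of_mem _ hf, hx2⟩⟩
  exact_mod_cast (Finset.card_le_card this).trans Finset.card_biUnion_le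

lemma vis_avg (F0 F : Finset G) (C : Set Z) (z : Z) :
    F0.card * vis F C z ≤ mv F0 C * F.card +
      ∑ h ∈ F0, (F \ F.image (fun x => h * x)).card := by
  classical
  have h1 : ∀ h ∈ F0, vis F C z ≤
      (F.filter (fun f => (h * f) • z ∈ C)).card + (F \ F.image (fun x => h * x)).card := by
    intro h _
    refine (vis_le_add (F.image (fun x => h * x)) F C z).trans ?_
    gcongr
    unfold vis
    rw [Finset.filter_image]
    exact Finset.card_image_le
  have h2 : ∑ h ∈ F0, (F.filter (fun f => (h * f) • z ∈ C)).card ≤ mv F0 C * F.card := by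
    simp only [Finset.card_filter]
    rw [Finset.sum_comm]
    rw [mul_comm, ← smul_eq_mul]
    refine Finset.sum_le_card_nsmul _ _ _ fun f _ => ?_
    refine le_trans (le_of_eq ?_) (vis_le_mv F0 C (f • z))
    unfold vis
    rw [Finset.card_filter]
    simp only [mul_smul]
  calc F0.card * vis F C z = ∑ h ∈ F0, vis F C z := by simp
    _ ≤ ∑ h ∈ F0, ((F.filter (fun f => (h * f) • z ∈ C)).card +
          (F \ F.image (fun x => h * x)).card) := Finset.sum_le_sum h1
    _ ≤ _ := by rw [Finset.sum_add_distrib]; gcongr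

lemma ev_vis {F : ℕ → Finset G} (hF : Fol F) (C : Set Z) (a : ℝ) (ha : D G C < a) :
    ∀ᶠ n in atTop, ∀ z, (vis (F n) C z : ℝ) ≤ a * (F n).card := by
  obtain ⟨⟨F0, hF0⟩, h0⟩ := exists_lt_of_ciInf_lt ha
  simp only at h0
  have hpos0 : (0 : ℝ) < F0.card := by exact_mod_cast hF0.card_pos
  have ht := tendsto_finsetSum F0 (fun g _ => hF.2 g)
  simp only [Finset.sum_const_zero] at ht
  have hgap : 0 < a * F0.card - mv F0 C := by
    rw [div_lt_iff₀ hpos0] at h0; linarith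
  filter_upwards [ht.eventually_lt_const hgap] with n hn z
  have hpos : (0 : ℝ) < (F n).card := by exact_mod_cast (hF.1 n).card_pos
  rw [← Finset.sum_div, div_lt_iff₀ hpos] at hn
  have h1 : (F0.card : ℝ) * vis (F n) C z ≤ mv F0 C * (F n).card +
      ∑ h ∈ F0, ((F n \ (F n).image (fun x => h * x)).card : ℝ) := by
    exact_mod_cast vis_avg F0 (F n) C z
  have h2 : (F0.card : ℝ) * vis (F n) C z ≤ F0.card * (a * (F n).card) := by
    nlinarith
  exact le_of_mul_le_mul_left h2 hpos0

lemma D_union [Nonempty Z] {F : ℕ → Finset G} (hF : Fol F) (C C' : Set Z) :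
    D G (C ∪ C') ≤ D G C + D G C' := by
  refine le_of_forall_pos_le_add fun ε hε => ?_
  have h1 := ev_vis hF C (D G C + ε / 2) (by linarith)
  have h2 := ev_vis hF C' (D G C' + ε / 2) (by linarith)
  obtain ⟨n, hn1, hn2⟩ := (h1.and h2).exists
  refine D_le_of _ (F n) (hF.1 n) _ fun z => ?_
  have h3 : (vis (F n) (C ∪ C') z : ℝ) ≤ vis (F n) C z + vis (F n) C' z := by
    exact_mod_cast vis_union _ _ _ _
  have := hn1 z
  have := hn2 z
  linarith

end fol
end DN


namespace DN

section top
variable {G : Type} [Group G] [DecidableEq G] {Z : Type} [MulAction G Z]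
  [TopologicalSpace Z] [CompactSpace Z] [T2Space Z] [TotallyDisconnectedSpace Z]
  [ContinuousConstSMul G Z] [Nonempty Z]

lemma small_pt [Infinite G] (hfree : ∀ (g : G) (z : Z), g • z = z → g = 1) (z : Z) (η : ℝ)
    (hη : 0 < η) : ∃ E : Set Z, IsClopen E ∧ z ∈ E ∧ D G E ≤ η := by
  classical
  obtain ⟨n, hn⟩ := exists_nat_one_div_lt hη
  obtain ⟨S, hS⟩ := Infinite.exists_subset_card_eq G (n + 1)
  have h1 : ∀ g : G, ∃ U : Set Z, IsOpen U ∧ z ∈ U ∧ (g ≠ 1 → ∀ u ∈ U, g • u ∉ U) := by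
    intro g
    by_cases hg : g = 1
    · exact ⟨Set.univ, isOpen_univ, trivial, fun h => absurd hg h⟩
    · have hne : z ≠ g • z := fun h => hg (hfree g z h.symm)
      obtain ⟨U, V, hU, hV, hzU, hzV, hd⟩ := t2_separation hne
      refine ⟨U ∩ (fun w => g • w) ⁻¹' V, hU.inter (hV.preimage (continuous_const_smul g)),
        ⟨hzU, hzV⟩, fun _ u hu hu' => ?_⟩
      exact Set.disjoint_left.1 hd hu'.1 hu.2
  choose U hUo hzU hU using h1
  obtain ⟨E, hE, hzE, hEU⟩ := compact_exists_isClopen_in_isOpen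
    (isOpen_biInter_finset (s := S ×ˢ S) (f := fun p => U (p.2 * p.1⁻¹)) (fun p _ => hUo _))
    (x := z) (Set.mem_iInter₂.2 fun p _ => hzU _)
  refine ⟨E, hE, hzE, ?_⟩
  have hSne : S.Nonempty := by rw [← Finset.card_pos, hS]; omega
  refine D_le_of E S hSne η fun w => ?_
  have hv : vis S E w ≤ 1 := by
    unfold vis
    rw [Finset.card_le_one]
    intro a ha b hb
    rw [Finset.mem_filter] at ha hb
    by_contra hab
    have hne : b * a⁻¹ ≠ 1 := fun h => hab (mul_inv_eq_one.1 h).symm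
    have hsub : E ⊆ U (b * a⁻¹) := fun x hx =>
      Set.mem_iInter₂.1 (hEU hx) (a, b) (Finset.mem_product.2 ⟨ha.1, hb.1⟩)
    refine hU _ hne (a • w) (hsub ha.2) (hsub ?_)
    rw [smul_smul, inv_mul_cancel_right]
    exact hb.2
  have : (1 : ℝ) ≤ η * S.card := by
    rw [hS]; push_cast
    rw [div_lt_iff₀ (by positivity)] at hn
    exact hn.le
  refine le_trans ?_ this
  exact_mod_cast hv

lemma D_empty : D G (∅ : Set Z) ≤ 0 :=
  D_le_of ∅ {1} (by simp) 0 fun z => by simp [vis]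

lemma small_fin [Infinite G] (hfree : ∀ (g : G) (z : Z), g • z = z → g = 1)
    {Fs : ℕ → Finset G} (hFs : Fol Fs) (T : Finset Z) : ∀ η : ℝ, 0 < η →
    ∃ E : Set Z, IsClopen E ∧ (T : Set Z) ⊆ E ∧ D G E ≤ η := by
  classical
  induction T using Finset.induction_on with
  | empty => exact fun η hη => ⟨∅, isClopen_empty, by simp, D_empty.trans hη.le⟩
  | insert z T _ ih =>
    intro η hη
    obtain ⟨E, hE, hT, hD⟩ := ih (η / 2) (by linarith)
    obtain ⟨E', hE', hz, hD'⟩ := small_pt hfree z (η / 2) (by linarith)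
    refine ⟨E' ∪ E, hE'.union hE, ?_, ?_⟩
    · rw [Finset.coe_insert]
      exact Set.insert_subset (Or.inl hz) (hT.trans Set.subset_union_right)
    · have := D_union hFs E' E
      linarith

lemma shrink [Infinite G] (hfree : ∀ (g : G) (z : Z), g • z = z → g = 1)
    {Fs : ℕ → Finset G} (hFs : Fol Fs) (A : Set Z) (hA : IsClopen A) (hD : 1 / 2 < D G A) (T : Finset Z)
    (hT : (T : Set Z) ⊆ A) (η : ℝ) (hη : 0 < η) :
    ∃ A' : Set Z, IsClopen A' ∧ A' ⊆ A ∧ (T : Set Z) ⊆ A' ∧ 1 / 2 < D G A' ∧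
      D G A' ≤ 1 / 2 + η := by
  classical
  obtain ⟨E, hE, hTE, hDE⟩ := small_fin hfree hFs T (1 / 4) (by norm_num)
  choose C hC hzC hDC using fun z => small_pt (G := G) hfree (z : Z) η hη
  obtain ⟨t, ht⟩ := CompactSpace.elim_nhds_subcover C (fun z => (hC z).isOpen.mem_nhds (hzC z))
  have key : ∀ t : Finset Z, (∃ A' : Set Z, IsClopen A' ∧ A' ⊆ A ∧ (T : Set Z) ⊆ A' ∧
      1 / 2 < D G A' ∧ D G A' ≤ 1 / 2 + η) ∨
      ∃ A' : Set Z, IsClopen A' ∧ A' ⊆ A ∧ (T : Set Z) ⊆ A' ∧ 1 / 2 < D G A' ∧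
        ∀ z ∈ t, A' ∩ C z ⊆ E := by
    intro t
    induction t using Finset.induction_on with
    | empty => exact Or.inr ⟨A, hA, subset_rfl, hT, hD, by simp⟩
    | insert z t _ ih =>
      rcases ih with ih | ⟨A', h1, h2, h3, h4, h5⟩
      · exact Or.inl ih
      · by_cases hcase : 1 / 2 < D G (A' \ (C z \ E))
        · refine Or.inr ⟨A' \ (C z \ E), h1.diff ((hC z).diff hE), Set.sdiff_subset.trans h2, ?_,
            hcase, ?_⟩
          · intro x hx
            exact ⟨h3 hx, fun h => h.2 (hTE hx)⟩
          · intro w hw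
            rcases Finset.mem_insert.1 hw with rfl | hw
            · rintro x ⟨⟨_, h⟩, hx⟩
              by_contra hxE
              exact h ⟨hx, hxE⟩
            · exact (Set.inter_subset_inter_left _ Set.sdiff_subset).trans (h5 w hw)
        · refine Or.inl ⟨A', h1, h2, h3, h4, ?_⟩
          have e1 : A' ⊆ (A' \ (C z \ E)) ∪ C z := by
            intro x hx
            by_cases hxC : x ∈ C z
            · exact Or.inr hxC
            · exact Or.inl ⟨hx, fun h => hxC h.1⟩
          have e2 := D_mono (G := G) e1
          have e3 := D_union hFs (A' \ (C z \ E)) (C z)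
          have e4 := hDC z
          push Not at hcase
          linarith
  rcases key t with h | ⟨A', _, _, _, h4, h5⟩
  · exact h
  · exfalso
    have : A' ⊆ E := by
      intro x hx
      have hx' : x ∈ ⋃ z ∈ t, C z := by rw [ht]; trivial
      obtain ⟨z, hz, hxz⟩ := Set.mem_iUnion₂.1 hx'
      exact h5 z hz ⟨hx, hxz⟩
    have := D_mono (G := G) this
    linarith

end top
end DN


namespace DN

def XX (G : Type) [Group G] {Z K : Type} [MulAction G Z] (A : Set Z) (κ : Z → K) :
    Set (Z × (G → K)) :=
  {p | ∀ g : G, g • p.1 ∉ A → p.2 g = κ (g • p.1)}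

section top
variable {G : Type} [Group G] [DecidableEq G] {Z : Type} [MulAction G Z]
  [TopologicalSpace Z] [CompactSpace Z] [T2Space Z] [TotallyDisconnectedSpace Z]
  [ContinuousConstSMul G Z] [Nonempty Z] {K : Type} [TopologicalSpace K]

lemma open_avoid [Infinite G] (hfree : ∀ (g : G) (z : Z), g • z = z → g = 1)
    [MulAction.IsMinimal G Z] (U : Set Z) (hU : IsOpen U) (hne : U.Nonempty) (B : Set Z)
    (hB : B.Finite) : ∃ z ∈ U, z ∉ B := by
  by_contra! hcon
  have hUf : U.Finite := hB.subset hcon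
  obtain ⟨I, hI⟩ := isCompact_univ.exists_finite_cover_smul G hU hne
  have hfin : (Set.univ : Set Z).Finite := by
    refine Set.Finite.subset (Set.Finite.biUnion I.finite_toSet (fun g _ => hUf.image (g • ·))) ?_
    intro z hz
    obtain ⟨g, hg, w, hw, h⟩ := Set.mem_iUnion₂.1 (hI hz)
    exact Set.mem_iUnion₂.2 ⟨g, hg, w, hw, h⟩
  have := Set.finite_univ_iff.1 hfin
  have hinj : Function.Injective fun g : G => g • (Classical.arbitrary Z) := by
    intro g h hgh
    have : (h⁻¹ * g) • (Classical.arbitrary Z) = Classical.arbitrary Z := by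
      rw [mul_smul]; simp only at hgh; rw [hgh, inv_smul_smul]
    have := hfree _ _ this
    exact (inv_mul_eq_one.1 this).symm
  exact (Finite.of_injective _ hinj).false

lemma task [Infinite G] (hfree : ∀ (g : G) (z : Z), g • z = z → g = 1)
    [MulAction.IsMinimal G Z] {Fs : ℕ → Finset G} (hFs : Fol Fs)
    (A : Set Z) (hA : IsClopen A) (hD : 1 / 2 < D G A) (κ : Z → K) (hκ : IsLocallyConstant κ)
    (T : Finset Z) (hT : (T : Set Z) ⊆ A) (O : Set (Z × (G → K))) (hO : IsOpen O)
    (hne : (XX G A κ ∩ O).Nonempty) :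
    ∃ (A' : Set Z) (κ' : Z → K), IsClopen A' ∧ A' ⊆ A ∧ 1 / 2 < D G A' ∧ (T : Set Z) ⊆ A' ∧
      IsLocallyConstant κ' ∧ (∀ z ∉ A, κ' z = κ z) ∧
      ∃ V : Set Z, IsOpen V ∧ V.Nonempty ∧ ∀ p ∈ XX G A' κ', p.1 ∈ V → p ∈ O := by
  classical
  obtain ⟨⟨z', x'⟩, hX, hO'⟩ := hne
  obtain ⟨U, hU, hzU, F, hUF⟩ : ∃ U : Set Z, IsOpen U ∧ z' ∈ U ∧ ∃ F : Finset G,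
      ∀ w ∈ U, ∀ x : G → K, (∀ h ∈ F, x h = x' h) → (w, x) ∈ O := by
    obtain ⟨u, v, hu, hv, h1, h2, h3⟩ := isOpen_prod_iff.1 hO z' x' hO'
    obtain ⟨I, c, hc1, hc2⟩ := isOpen_pi_iff.1 hv x' h2
    refine ⟨u, hu, h1, I, fun w hw x hx => h3 ⟨hw, hc2 fun i hi => ?_⟩⟩
    show x i ∈ c i
    rw [hx i hi]; exact (hc1 i hi).2
  have hsm : ∀ h : G, Continuous fun w : Z => h • w := fun h => continuous_const_smul h
  have hev : ∀ᶠ w in 𝓝 z', w ∈ U ∧ ∀ h ∈ F, ((h • w ∈ A ↔ h • z' ∈ A) ∧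
      κ (h • w) = κ (h • z')) := by
    refine Filter.Eventually.and (hU.mem_nhds hzU) ?_
    rw [Filter.eventually_all_finset]
    intro h _
    refine Filter.Eventually.and ?_ ?_
    · by_cases hh : h • z' ∈ A
      · filter_upwards [(hA.isOpen.preimage (hsm h)).mem_nhds hh] with w hw
        exact ⟨fun _ => hh, fun _ => hw⟩
      · filter_upwards [(hA.compl.isOpen.preimage (hsm h)).mem_nhds hh] with w hw
        exact ⟨fun h' => absurd h' hw, fun h' => absurd h' hh⟩
    · exact ((hsm h).tendsto z').eventually (hκ.eventually_eq (h • z'))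
  obtain ⟨U', hU'sub, hU', hzU'⟩ := mem_nhds_iff.1 hev
  obtain ⟨z0, hz0, hz0B⟩ := open_avoid hfree U' hU' ⟨z', hzU'⟩
    (↑((F ×ˢ T).image (fun p => p.1⁻¹ • p.2)) : Set Z) (Finset.finite_toSet _)
  have hz0T : ∀ h ∈ F, h • z0 ∉ T := by
    intro h hh hT'
    apply hz0B
    rw [Finset.mem_coe, Finset.mem_image]
    exact ⟨(h, h • z0), Finset.mem_product.2 ⟨hh, hT'⟩, inv_smul_smul _ _⟩
  obtain ⟨E, hE, hzE, hDE⟩ := small_fin hfree hFs (F.image (fun h => h • z0))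
    ((D G A - 1 / 2) / 2) (by linarith)
  obtain ⟨Us, hUs, hUsd⟩ := (F.image (fun h => h • z0)).finite_toSet.t2_separation
  have hev2 : ∀ᶠ w in 𝓝 z0, w ∈ U' ∧ ∀ h ∈ F, (h • w ∉ T ∧ h • w ∈ E ∧ h • w ∈ Us (h • z0)) := by
    refine Filter.Eventually.and (hU'.mem_nhds hz0) ?_
    rw [Filter.eventually_all_finset]
    intro h hh
    refine Filter.Eventually.and ?_ (Filter.Eventually.and ?_ ?_)
    · exact ((T.finite_toSet.isClosed.isOpen_compl).preimage (hsm h)).mem_nhds (hz0T h hh)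
    · exact (hE.isOpen.preimage (hsm h)).mem_nhds
        (hzE (Finset.mem_coe.2 (Finset.mem_image_of_mem _ hh)))
    · exact ((hUs _).2.preimage (hsm h)).mem_nhds (hUs (h • z0)).1
  obtain ⟨U2, hU2sub, hU2, hzU2⟩ := mem_nhds_iff.1 hev2
  obtain ⟨V, hV, hz0V, hVU2⟩ := compact_exists_isClopen_in_isOpen hU2 hzU2
  have hVp : ∀ w ∈ V, w ∈ U' ∧ ∀ h ∈ F, (h • w ∉ T ∧ h • w ∈ E ∧ h • w ∈ Us (h • z0)) :=
    fun w hw => hU2sub (hVU2 hw)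
  have hN : ∀ h : G, IsClopen {u : Z | h⁻¹ • u ∈ V} := fun h => hV.preimage (hsm h⁻¹)
  set R : Set Z := ⋃ h ∈ F, {u : Z | h⁻¹ • u ∈ V} with hR
  have hRc : IsClopen R := by
    refine Set.Finite.isClopen_biUnion F.finite_toSet fun h _ => hN h
  have hRE : R ⊆ E := by
    intro u hu
    obtain ⟨h, hh, hu⟩ := Set.mem_iUnion₂.1 hu
    have := ((hVp _ hu).2 h hh).2.1
    rwa [smul_inv_smul] at this
  have huniq : ∀ u, ∀ h ∈ F, ∀ h' ∈ F, h⁻¹ • u ∈ V → h'⁻¹ • u ∈ V → h = h' := by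
    intro u h hh h' hh' hu hu'
    have e1 := ((hVp _ hu).2 h hh).2.2
    have e2 := ((hVp _ hu').2 h' hh').2.2
    rw [smul_inv_smul] at e1 e2
    by_contra hne
    have hne' : h • z0 ≠ h' • z0 := by
      intro heq
      apply hne
      have : (h'⁻¹ * h) • z0 = z0 := by rw [mul_smul, heq, inv_smul_smul]
      exact (inv_mul_eq_one.1 (hfree _ _ this)).symm
    have := hUsd (Finset.mem_coe.2 (Finset.mem_image_of_mem (fun h => h • z0) hh))
      (Finset.mem_coe.2 (Finset.mem_image_of_mem (fun h => h • z0) hh')) hne'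
    exact Set.disjoint_left.1 this e1 e2
  let κ' : Z → K := fun u =>
    if h : u ∈ A ∧ ∃ h ∈ F, h⁻¹ • u ∈ V then x' (Classical.choose h.2) else κ u
  have hκ'1 : ∀ u ∈ A, ∀ h ∈ F, h⁻¹ • u ∈ V → κ' u = x' h := by
    intro u hu h hh hv
    have hex : u ∈ A ∧ ∃ h ∈ F, h⁻¹ • u ∈ V := ⟨hu, h, hh, hv⟩
    simp only [κ', dif_pos hex]
    have := Classical.choose_spec hex.2
    rw [huniq u _ this.1 h hh this.2 hv]
  have hκ'2 : ∀ u, ¬ (u ∈ A ∩ R) → κ' u = κ u := by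
    intro u hu
    refine dif_neg ?_
    rintro ⟨h1, h, hh, h2⟩
    exact hu ⟨h1, Set.mem_iUnion₂.2 ⟨h, hh, h2⟩⟩
  refine ⟨A \ R, κ', hA.diff hRc, Set.sdiff_subset, ?_, ?_, ?_, ?_, V, hV.isOpen, ⟨z0, hz0V⟩, ?_⟩
  · have e1 : A ⊆ (A \ R) ∪ E := by
      intro x hx
      by_cases hxR : x ∈ R
      · exact Or.inr (hRE hxR)
      · exact Or.inl ⟨hx, hxR⟩
    have e2 := D_mono (G := G) e1
    have e3 := D_union hFs (A \ R) E
    linarith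
  · intro t ht
    refine ⟨hT ht, fun htR => ?_⟩
    obtain ⟨h, hh, hu⟩ := Set.mem_iUnion₂.1 htR
    have := ((hVp _ hu).2 h hh).1
    rw [smul_inv_smul] at this
    exact this ht
  · rw [IsLocallyConstant.iff_eventually_eq]
    intro u
    by_cases hu : u ∈ A ∩ R
    · obtain ⟨h, hh, hv⟩ := Set.mem_iUnion₂.1 hu.2
      filter_upwards [hA.isOpen.mem_nhds hu.1, (hN h).isOpen.mem_nhds hv] with w hw1 hw2
      rw [hκ'1 u hu.1 h hh hv, hκ'1 w hw1 h hh hw2]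
    · filter_upwards [(hA.inter hRc).compl.isOpen.mem_nhds hu, hκ.eventually_eq u] with w hw1 hw2
      rw [hκ'2 u hu, hκ'2 w hw1, hw2]
  · intro z hz
    exact hκ'2 z fun h => hz h.1
  · rintro ⟨w, x⟩ hp hw
    have hwU := hU'sub (hVp w hw).1
    refine hUF w hwU.1 x fun h hh => ?_
    have hwR : h • w ∈ R := Set.mem_iUnion₂.2 ⟨h, hh, by
      show h⁻¹ • h • w ∈ V
      rwa [inv_smul_smul]⟩
    have e1 := hp h (fun h' => h'.2 hwR)
    simp only at e1
    rw [e1]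
    by_cases hA' : h • w ∈ A
    · refine hκ'1 _ hA' h hh ?_
      rwa [inv_smul_smul]
    · rw [hκ'2 _ (fun h' => hA' h'.1), (hwU.2 h hh).2]
      have hz'A : h • z' ∉ A := fun h' => hA' ((hwU.2 h hh).1.2 h')
      exact (hX h hz'A).symm

/-- construction states -/
structure St (G : Type) [Group G] (Z K : Type) [MulAction G Z] [TopologicalSpace Z] where
  A : Set Z
  κ : Z → K
  T : Finset Z
  hA : IsClopen A
  hκ : IsLocallyConstant κ
  hT : (T : Set Z) ⊆ A
  hD : 1 / 2 < D G A

open Pointwise in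
lemma step [Infinite G] (hfree : ∀ (g : G) (z : Z), g • z = z → g = 1)
    [MulAction.IsMinimal G Z] {Fs : ℕ → Finset G} (hFs : Fol Fs)
    (σ : St G Z K) (O : Set (Z × (G → K))) (hO : IsOpen O) (W : Finset G) (η : ℝ) (hη : 0 < η) :
    ∃ σ' : St G Z K, σ'.A ⊆ σ.A ∧ (σ.T ⊆ σ'.T) ∧ (∀ z ∉ σ.A, σ'.κ z = σ.κ z) ∧
      D G σ'.A ≤ 1 / 2 + η ∧
      ((XX G σ.A σ.κ ∩ O).Nonempty → ∃ V : Set Z, IsOpen V ∧ V.Nonempty ∧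
        ∀ p ∈ XX G σ'.A σ'.κ, p.1 ∈ V → p ∈ O) ∧
      ∃ (F S : Finset G) (z : Z), S ⊆ F ∧ (∀ h ∈ S, h • z ∈ σ'.T) ∧
        (W * F).card < 2 * S.card := by
  classical
  obtain ⟨A1, κ1, h1, h2, h3, h4, h5, h6, h7⟩ : ∃ (A' : Set Z) (κ' : Z → K), IsClopen A' ∧
      A' ⊆ σ.A ∧ 1 / 2 < D G A' ∧ (σ.T : Set Z) ⊆ A' ∧
      IsLocallyConstant κ' ∧ (∀ z ∉ σ.A, κ' z = σ.κ z) ∧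
      ((XX G σ.A σ.κ ∩ O).Nonempty →
        ∃ V : Set Z, IsOpen V ∧ V.Nonempty ∧ ∀ p ∈ XX G A' κ', p.1 ∈ V → p ∈ O) := by
    by_cases hne : (XX G σ.A σ.κ ∩ O).Nonempty
    · obtain ⟨A', κ', a1, a2, a3, a4, a5, a6, a7⟩ :=
        task hfree hFs σ.A σ.hA σ.hD σ.κ σ.hκ σ.T σ.hT O hO hne
      exact ⟨A', κ', a1, a2, a3, a4, a5, a6, fun _ => a7⟩
    · exact ⟨σ.A, σ.κ, σ.hA, subset_rfl, σ.hD, σ.hT, σ.hκ, fun _ _ => rfl, fun h => absurd h hne⟩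
  obtain ⟨A2, b1, b2, b3, b4, b5⟩ := shrink hfree hFs A1 h1 h3 σ.T h4 η hη
  obtain ⟨n, hn⟩ := ((Fol_mul hFs W).eventually_lt_const
    (show 0 < 2 * D G A2 - 1 by linarith)).exists
  have hpos : (0 : ℝ) < (Fs n).card := by exact_mod_cast (hFs.1 n).card_pos
  rw [div_lt_iff₀ hpos] at hn
  obtain ⟨z, hz⟩ := exists_mv (Fs n) A2
  have hv := D_mul_le A2 (Fs n)
  rw [← hz] at hv
  have hWF : (W * Fs n).card ≤ ((W * Fs n) \ Fs n).card + (Fs n).card := by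
    have : (W * Fs n) ⊆ ((W * Fs n) \ Fs n) ∪ Fs n := by
      intro x hx
      by_cases hxF : x ∈ Fs n
      · exact Finset.mem_union_right _ hxF
      · exact Finset.mem_union_left _ (Finset.mem_sdiff.2 ⟨hx, hxF⟩)
    exact (Finset.card_le_card this).trans (Finset.card_union_le _ _)
  have hWF' : ((W * Fs n).card : ℝ) ≤ ((W * Fs n) \ Fs n).card + (Fs n).card := by
    exact_mod_cast hWF
  let S := (Fs n).filter (fun h => h • z ∈ A2)
  have hS : vis (Fs n) A2 z = S.card := by
    unfold vis; congr
  refine ⟨⟨A2, κ1, σ.T ∪ S.image (fun h => h • z), b1, h5, ?_, b4⟩, b2.trans h2,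
    Finset.subset_union_left, h6, b5, ?_, Fs n, S, z, Finset.filter_subset _ _, ?_, ?_⟩
  · intro x hx
    rcases Finset.mem_union.1 (Finset.mem_coe.1 hx) with hx | hx
    · exact b3 hx
    · obtain ⟨h, hh, rfl⟩ := Finset.mem_image.1 hx
      exact (Finset.mem_filter.1 hh).2
  · intro hne
    obtain ⟨V, v1, v2, v3⟩ := h7 hne
    refine ⟨V, v1, v2, fun p hp hpV => v3 p (fun g hg => hp g fun h => hg (b2 h)) hpV⟩
  · intro h hh
    exact Finset.mem_union_right _ (Finset.mem_image_of_mem _ hh)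
  · rw [hS] at hv
    have : ((W * Fs n).card : ℝ) < 2 * S.card := by nlinarith
    exact_mod_cast this

open Pointwise in
theorem exists_seq [Infinite G] [Nonempty K] (hfree : ∀ (g : G) (z : Z), g • z = z → g = 1)
    [MulAction.IsMinimal G Z] {Fs : ℕ → Finset G} (hFs : Fol Fs)
    (O : ℕ → Set (Z × (G → K))) (hO : ∀ n, IsOpen (O n)) (W : ℕ → Finset G) :
    ∃ (A : ℕ → Set Z) (κ : ℕ → Z → K), (∀ n, IsClopen (A n)) ∧ (∀ n, IsLocallyConstant (κ n)) ∧
      (∀ n, 1 / 2 < D G (A n)) ∧ (∀ n, D G (A (n + 1)) ≤ 1 / 2 + (1 / 2) ^ n) ∧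
      Antitone A ∧ (∀ n, ∀ z ∉ A n, κ (n + 1) z = κ n z) ∧
      (∀ n, (XX G (A n) (κ n) ∩ O n).Nonempty → ∃ V : Set Z, IsOpen V ∧ V.Nonempty ∧
        ∀ p ∈ XX G (A (n + 1)) (κ (n + 1)), p.1 ∈ V → p ∈ O n) ∧
      ∀ n, ∃ (F S : Finset G) (z : Z), S ⊆ F ∧ (∀ h ∈ S, ∀ m, h • z ∈ A m) ∧
        (W n * F).card < 2 * S.card := by
  classical
  choose f f1 f2 f3 f4 f5 f6 using fun (n : ℕ) (σ : St G Z K) =>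
    step hfree hFs σ (O n) (hO n) (W n) ((1 / 2) ^ n) (by positivity)
  let σ0 : St G Z K := ⟨Set.univ, fun _ => Classical.arbitrary K, ∅, isClopen_univ,
    IsLocallyConstant.const _, by simp, by
      have := one_le_D_univ (G := G) (Z := Z)
      linarith⟩
  let σ : ℕ → St G Z K := fun n => Nat.rec σ0 (fun n s => f n s) n
  have hσ : ∀ n, σ (n + 1) = f n (σ n) := fun n => rfl
  have hanti : Antitone fun n => (σ n).A := antitone_nat_of_succ_le fun n => by
    rw [hσ]; exact f1 n (σ n)
  have hT : Monotone fun n => (σ n).T := monotone_nat_of_le_succ fun n => by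
    rw [hσ]; exact f2 n (σ n)
  refine ⟨fun n => (σ n).A, fun n => (σ n).κ, fun n => (σ n).hA, fun n => (σ n).hκ,
    fun n => (σ n).hD, fun n => f4 n (σ n), hanti, fun n => f3 n (σ n), fun n => f5 n (σ n), ?_⟩
  intro n
  obtain ⟨F, S, z, h1, h2, h3⟩ := f6 n (σ n)
  refine ⟨F, S, z, h1, fun h hh m => ?_, h3⟩
  rcases le_total m (n + 1) with hm | hm
  · exact hanti hm ((σ (n + 1)).hT (h2 h hh))
  · exact (σ m).hT (hT hm (h2 h hh))

end top
end DN


namespace UP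

/-- the `n`-skeleton of the standard simplex -/
lemma skel (N n : ℕ) : ∃ P : Geometry.SimplicialComplex ℝ (Fin N → ℝ),
    P.faces.Finite ∧ (∀ s ∈ P.faces, s.card ≤ n + 1) ∧
    ∀ w : Fin N → ℝ, (∀ i, 0 ≤ w i) → ∑ i, w i = 1 → ∀ T : Finset (Fin N), T.card ≤ n + 1 →
      (∀ i ∉ T, w i = 0) → w ∈ P.space := by
  classical
  let e : Fin N → (Fin N → ℝ) := fun i => Pi.single i 1
  have he : AffineIndependent ℝ e := by
    have h1 := (Pi.basisFun ℝ (Fin N)).linearIndependent.affineIndependent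
    have h2 : (⇑(Pi.basisFun ℝ (Fin N)) : Fin N → (Fin N → ℝ)) = e := by
      funext i; simp [e]
    rwa [h2] at h1
  have hr : AffineIndependent ℝ (Subtype.val : Set.range e → (Fin N → ℝ)) := he.range
  let abs : PreAbstractSimplicialComplex (Fin N → ℝ) :=
    { faces := {s | s.Nonempty ∧ (s : Set (Fin N → ℝ)) ⊆ Set.range e ∧ s.card ≤ n + 1}
      isRelLowerSet_faces := by
        intro s hs
        refine ⟨hs.1, fun t hts ht => ⟨ht, ?_, ?_⟩⟩
        · exact (Finset.coe_subset.2 hts).trans hs.2.1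
        · exact (Finset.card_le_card hts).trans hs.2.2 }
  have hsub : (⋃ s ∈ abs.faces, (s : Set (Fin N → ℝ))) ⊆ Set.range e :=
    Set.iUnion₂_subset fun s hs => hs.2.1
  let P : Geometry.SimplicialComplex ℝ (Fin N → ℝ) :=
    Geometry.SimplicialComplex.ofAffineIndependent abs (hr.mono hsub)
  have hPf : P.faces = {s : Finset (Fin N → ℝ) | s.Nonempty ∧ (s : Set (Fin N → ℝ)) ⊆ Set.range e ∧ s.card ≤ n + 1} :=
    rfl
  refine ⟨P, ?_, ?_, ?_⟩
  · have hf : (Set.univ.image e).Finite := Set.toFinite _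
    refine (Finset.finite_toSet (hf.toFinset.powerset)).subset ?_
    intro s hs
    rw [hPf] at hs
    rw [Finset.mem_coe, Finset.mem_powerset]
    intro x hx
    rw [Set.Finite.mem_toFinset, Set.image_univ]
    exact hs.2.1 hx
  · intro s hs
    rw [hPf] at hs
    exact hs.2.2
  · intro w hw0 hw1 T hT hwT
    rw [Geometry.SimplicialComplex.mem_space_iff]
    have hsumT : ∑ i ∈ T, w i = 1 := by
      rw [← hw1]
      exact Finset.sum_subset (Finset.subset_univ _) fun i _ hi => hwT i hi
    have hTne : T.Nonempty := by
      rw [Finset.nonempty_iff_ne_empty]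
      rintro rfl
      simp at hsumT
    refine ⟨T.image e, ?_, ?_⟩
    · rw [hPf]
      refine ⟨hTne.image _, ?_, Finset.card_image_le.trans hT⟩
      intro x hx
      obtain ⟨i, _, rfl⟩ := Finset.mem_image.1 (Finset.mem_coe.1 hx)
      exact ⟨i, rfl⟩
    · have hmem : ∑ i ∈ T, w i • e i ∈ convexHull ℝ (↑(T.image e) : Set (Fin N → ℝ)) := by
        refine (convex_convexHull ℝ _).sum_mem (fun i _ => hw0 i) hsumT fun i hi => ?_
        exact subset_convexHull ℝ _ (Finset.mem_coe.2 (Finset.mem_image_of_mem _ hi))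
      convert hmem
      ext j
      rw [Finset.sum_apply]
      simp only [e, Pi.smul_apply, smul_eq_mul, Pi.single_apply, mul_ite, mul_one, mul_zero]
      rw [Finset.sum_ite_eq]
      split_ifs with h
      · rfl
      · exact hwT j h

lemma widim_le_of {X : Type*} [TopologicalSpace X] {ρ : X → X → ℝ} {ε : ℝ} {n : ℕ}
    {I Q : Type*} [Fintype I] [Finite Q] (p : X → Q) (hp : IsLocallyConstant p)
    (y : X → I → ℝ) (hy : Continuous y) (hy01 : ∀ x i, y x i ∈ Set.Icc (0 : ℝ) 1)
    (hsupp : ∀ x, ∃ T : Finset I, T.card ≤ n ∧ ∀ i ∉ T, y x i = 0)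
    (hρ : ∀ x x', p x = p x' → y x = y x' → ρ x x' < ε) : WidimLE X ρ ε n := by
  classical
  have := Fintype.ofFinite Q
  let V := I ⊕ Q
  let N := Fintype.card V
  let τ : V ≃ Fin N := Fintype.equivFin V
  set c : ℝ := 1 / ((Fintype.card I : ℝ) + 1) with hc
  have hcpos : 0 < c := by positivity
  let r : X → ℝ := fun x => 1 - ∑ i, c * y x i
  have hr : ∀ x, 0 < r x := by
    intro x
    have h1 : ∑ i, c * y x i ≤ ∑ _i : I, c :=
      Finset.sum_le_sum fun i _ => by have := (hy01 x i).2; nlinarith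
    rw [Finset.sum_const, Finset.card_univ, nsmul_eq_mul] at h1
    have h2 : (Fintype.card I : ℝ) * c < 1 := by
      rw [hc, mul_one_div, div_lt_one (by positivity)]; linarith
    simp only [r]; linarith
  let w : X → V → ℝ := fun x => Sum.elim (fun i => c * y x i) (fun q => if q = p x then r x else 0)
  have hw : Continuous w := by
    refine continuous_pi fun v => ?_
    rcases v with i | q
    · exact continuous_const.mul ((continuous_apply i).comp hy)
    · have hrc : Continuous r := continuous_const.sub
        (continuous_finsetSum _ fun i _ => continuous_const.mul ((continuous_apply i).comp hy))
      have hcl : IsClopen {x | q = p x} := by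
        have := hp.isClopen_fiber q
        convert this using 1
        ext x; exact eq_comm
      show Continuous fun x => if q = p x then r x else 0
      refine Continuous.if (fun a ha => ?_) hrc continuous_const
      rw [hcl.frontier_eq] at ha
      exact absurd ha (Set.notMem_empty a)
  obtain ⟨P, hP1, hP2, hP3⟩ := skel N n
  have hmem : ∀ x, (fun k => w x (τ.symm k)) ∈ P.space := by
    intro x
    obtain ⟨T, hT, hT0⟩ := hsupp x
    refine hP3 _ ?_ ?_ ((T.disjSum {p x}).map τ.toEmbedding) ?_ ?_
    · intro k
      rcases τ.symm k with i | q
      · exact mul_nonneg hcpos.le (hy01 x i).1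
      · show 0 ≤ if q = p x then r x else 0
        split_ifs
        · exact (hr x).le
        · exact le_rfl
    · rw [τ.symm.sum_comp (fun v => w x v), Fintype.sum_sum_type]
      simp [w, r]
    · rw [Finset.card_map, Finset.card_disjSum]; simpa using hT
    · intro k hk
      have hk' : τ.symm k ∉ T.disjSum {p x} := by
        intro h; apply hk
        rw [Finset.mem_map]
        exact ⟨_, h, by simp⟩
      rcases hv : τ.symm k with i | q
      · rw [hv, Finset.inl_mem_disjSum] at hk'
        simp [w, hT0 i hk']
      · rw [hv, Finset.inr_mem_disjSum, Finset.mem_singleton] at hk'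
        simp [w, hk']
  refine ⟨N, P, hP1, hP2, fun x => ⟨_, hmem x⟩, ?_, ?_⟩
  · refine Continuous.subtype_mk (continuous_pi fun k => (continuous_apply (τ.symm k)).comp hw) _
  · intro x x' h
    have h' : ∀ v, w x v = w x' v := by
      intro v
      have := congrFun (congrArg Subtype.val h) (τ v)
      simpa using this
    refine hρ x x' ?_ ?_
    · have := h' (Sum.inr (p x))
      simp only [w, Sum.elim_inr, if_true] at this
      by_contra hne
      rw [if_neg hne] at this
      exact (hr x).ne' this
    · funext i
      have := h' (Sum.inl i)
      simp only [w, Sum.elim_inl] at this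
      exact mul_left_cancel₀ hcpos.ne' this

/-- uniformity from compactness -/
lemma unif {X ι : Type*} [MetricSpace X] [CompactSpace X] (U : ι → Set (X × X))
    (hU : ∀ i, IsOpen (U i)) (hsep : ∀ x x', x ≠ x' → ∃ i, (x, x') ∈ U i) (ε : ℝ) (hε : 0 < ε) :
    ∃ t : Finset ι, ∀ x x', (∀ i ∈ t, (x, x') ∉ U i) → dist x x' < ε := by
  have hcl : IsClosed {q : X × X | ε ≤ dist q.1 q.2} :=
    isClosed_le continuous_const continuous_dist
  obtain ⟨t, ht⟩ := hcl.isCompact.elim_finite_subcover U hU (by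
    rintro ⟨x, x'⟩ hx
    have hne : x ≠ x' := by
      rintro rfl
      simp only [Set.mem_ofPred_eq, dist_self] at hx
      linarith
    exact Set.mem_iUnion.2 (hsep x x' hne))
  refine ⟨t, fun x x' h => ?_⟩
  by_contra hcon
  push Not at hcon
  obtain ⟨i, hi, hxi⟩ := Set.mem_iUnion₂.1 (ht (show (x, x') ∈ {q : X × X | ε ≤ dist q.1 q.2} from hcon))
  exact h i hi hxi

end UP


namespace SY
open DN

/-- abstract description of the constructed system -/
structure Sys {G Z X : Type} [Group G] [MulAction G Z] [TopologicalSpace Z] [TopologicalSpace X]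
    (d : ℕ) (A : ℕ → Set Z) (κ : ℕ → Z → (Fin d → TripodSet)) (φ : G → X → X) (π : X → Z)
    (c : X → G → (Fin d → TripodSet)) : Prop where
  hA : ∀ n, IsClopen (A n)
  hκ : ∀ n, IsLocallyConstant (κ n)
  hπ : Continuous π
  hc : Continuous c
  hπg : ∀ g x, π (φ g x) = g • π x
  hcg : ∀ g x h, c (φ g x) h = c x (h * g)
  hinj : ∀ x x', π x = π x' → c x = c x' → x = x'
  hX : ∀ n x g, g • π x ∉ A n → c x g = κ n (g • π x)
  hfib : ∀ (z : Z) (S : Finset G), (∀ g ∈ S, ∀ m, g • z ∈ A m) →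
    ∃ ψ : (S → (Fin d → TripodSet)) → X, Continuous ψ ∧ ∀ y s, c (ψ y) s.1 = y s

section
variable {G Z X : Type} [Group G] [MulAction G Z] [TopologicalSpace Z] [CompactSpace Z] [T2Space Z]
  [TotallyDisconnectedSpace Z] [ContinuousConstSMul G Z] [MetricSpace X] [CompactSpace X]
  {d : ℕ} {A : ℕ → Set Z} {κ : ℕ → Z → (Fin d → TripodSet)} {φ : G → X → X} {π : X → Z}
  {c : X → G → (Fin d → TripodSet)}

lemma eps (s : Sys d A κ φ π c) : ∃ ε > 0, ∀ x x', dist x x' < ε →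
    dist (c x 1) (c x' 1) < 1 / 2 := by
  have h1 : Continuous fun x => c x 1 := (continuous_apply 1).comp s.hc
  have h2 := CompactSpace.uniformContinuous_of_continuous h1
  obtain ⟨ε, hε, h⟩ := Metric.uniformContinuous_iff.1 h2 (1 / 2) (by norm_num)
  exact ⟨ε, hε, fun x x' hx => h hx⟩

/-- the fibre cube over a point -/
lemma cube (s : Sys d A κ φ π c) (z : Z) (S : Finset G) (hS : ∀ g ∈ S, ∀ m, g • z ∈ A m)
    (ε : ℝ) (hε : ∀ x x', dist x x' < ε → dist (c x 1) (c x' 1) < 1 / 2) :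
    ∃ ψ : ((S × Fin d) → TripodSet) → X, Continuous ψ ∧
      ∀ y y', (∃ j, 1 / 2 ≤ dist (y j) (y' j)) → ∃ g ∈ S, ε ≤ dist (φ g (ψ y)) (φ g (ψ y')) := by
  obtain ⟨ψ, h1, h2⟩ := s.hfib z S hS
  refine ⟨fun y => ψ fun g i => y (g, i), h1.comp ?_, ?_⟩
  · exact continuous_pi fun g => continuous_pi fun i => continuous_apply (g, i)
  · rintro y y' ⟨⟨g, i⟩, hj⟩
    refine ⟨g.1, g.2, ?_⟩
    by_contra hcon
    push Not at hcon
    have h3 := hε _ _ hcon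
    rw [s.hcg, s.hcg, one_mul, h2, h2] at h3
    have h4 := dist_le_pi_dist (fun i => y (g, i)) (fun i => y' (g, i)) i
    linarith

lemma dyn_ge (F : Finset G) (g : G) (hg : g ∈ F) (x x' : X) :
    dist (φ g x) (φ g x') ≤ dynDist φ (F : Set G) x x' := by
  refine le_csSup (F.finite_toSet.image _).bddAbove ⟨g, hg, rfl⟩

lemma dyn_lt (F : Finset G) (ε : ℝ) (hε : 0 < ε) (x x' : X)
    (h : ∀ g ∈ F, dist (φ g x) (φ g x') < ε) : dynDist φ (F : Set G) x x' < ε := by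
  unfold dynDist
  rcases F.eq_empty_or_nonempty with rfl | hF
  · simpa using hε
  · have hfin : ((fun g => dist (φ g x) (φ g x')) '' (F : Set G)).Finite := F.finite_toSet.image _
    obtain ⟨g, hg, he⟩ := (Set.Nonempty.image _ (Finset.coe_nonempty.2 hF)).csSup_mem hfin
    rw [← he]
    exact h g hg

lemma widim_ge (s : Sys d A κ φ π c) (z : Z) (S F : Finset G) (hSF : S ⊆ F)
    (hS : ∀ g ∈ S, ∀ m, g • z ∈ A m)
    (ε : ℝ) (hε : ∀ x x', dist x x' < ε → dist (c x 1) (c x' 1) < 1 / 2) :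
    ((S.card * d : ℕ) : ℕ∞) ≤ widim X (dynDist φ (F : Set G)) ε := by
  refine le_sInf ?_
  rintro _ ⟨m, rfl, hm⟩
  obtain ⟨ψ, h1, h2⟩ := cube s z S hS ε hε
  have := TP.widim_lower hm ψ h1 (fun y y' h => by
    obtain ⟨g, hg, h3⟩ := h2 y y' h
    exact h3.trans (dyn_ge F g (hSF hg) _ _))
  rw [Fintype.card_prod, Fintype.card_coe, Fintype.card_fin] at this
  exact_mod_cast this

lemma widim_le (s : Sys d A κ φ π c) (ε : ℝ) (hε : 0 < ε) : ∃ W : Finset G, 1 ∈ W ∧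
    ∀ (k : ℕ) (F F' : Finset G), F ⊆ F' → (∀ w ∈ W, ∀ g ∈ F, w * g ∈ F') → ∀ m : ℕ,
      (∀ z, vis F' (A k) z ≤ m) → WidimLE X (dynDist φ (F : Set G)) ε (m * d) := by
  classical
  let U : TopologicalSpace.Clopens Z ⊕ G → Set (X × X) := Sum.elim
    (fun B => {q | π q.1 ∈ B ∧ π q.2 ∉ B}) (fun h => {q | c q.1 h ≠ c q.2 h})
  have hU : ∀ i, IsOpen (U i) := by
    rintro (B | h)
    · exact (B.isClopen.isOpen.preimage (s.hπ.comp continuous_fst)).inter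
        (B.isClopen.compl.isOpen.preimage (s.hπ.comp continuous_snd))
    · exact isOpen_ne_fun ((continuous_apply h).comp (s.hc.comp continuous_fst))
        ((continuous_apply h).comp (s.hc.comp continuous_snd))
  have hsep : ∀ x x', x ≠ x' → ∃ i, (x, x') ∈ U i := by
    intro x x' hne
    by_cases hπ : π x = π x'
    · have : c x ≠ c x' := fun h => hne (s.hinj x x' hπ h)
      obtain ⟨h, hh⟩ := Function.ne_iff.1 this
      exact ⟨Sum.inr h, hh⟩
    · obtain ⟨B, hB, hxB, hB'⟩ := compact_exists_isClopen_in_isOpen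
        (isOpen_compl_singleton (x := π x')) (show π x ∈ {π x'}ᶜ from hπ)
      refine ⟨Sum.inl ⟨B, hB⟩, hxB, fun h => ?_⟩
      exact hB' h rfl
  obtain ⟨t, ht⟩ := UP.unif U hU hsep ε hε
  let tB : Finset (TopologicalSpace.Clopens Z) := t.toLeft
  let W : Finset G := insert 1 t.toRight
  have htt : ∀ x x', (∀ B ∈ tB, π x ∈ B ↔ π x' ∈ B) → (∀ h ∈ W, c x h = c x' h) →
      dist x x' < ε := by
    intro x x' h1 h2
    refine ht x x' ?_
    rintro (B | h) hi hmem
    · exact hmem.2 ((h1 B (Finset.mem_toLeft.2 hi)).1 hmem.1)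
    · exact hmem (h2 h (Finset.mem_insert_of_mem (Finset.mem_toRight.2 hi)))
  refine ⟨W, Finset.mem_insert_self _ _, fun k F F' hFF hWF m hm => ?_⟩
  let ℓ : Z → F' → ((tB → Prop) × Prop × (Fin d → TripodSet)) := fun z g =>
    (fun B => g.1 • z ∈ B.1, g.1 • z ∈ A k, κ k (g.1 • z))
  have hℓ : IsLocallyConstant ℓ := by
    rw [IsLocallyConstant.iff_eventually_eq]
    intro z
    have hsm : ∀ h : G, Continuous fun w : Z => h • w := fun h => continuous_const_smul h
    have hcl : ∀ (B : Set Z), IsClopen B → ∀ h : G, ∀ᶠ w in 𝓝 z, (h • w ∈ B) = (h • z ∈ B) := by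
      intro B hB h
      by_cases hh : h • z ∈ B
      · filter_upwards [(hB.isOpen.preimage (hsm h)).mem_nhds hh] with w hw
        exact propext ⟨fun _ => hh, fun _ => hw⟩
      · filter_upwards [(hB.compl.isOpen.preimage (hsm h)).mem_nhds hh] with w hw
        exact propext ⟨fun h' => absurd h' hw, fun h' => absurd h' hh⟩
    have : ∀ᶠ w in 𝓝 z, ∀ g : F', ((∀ B : tB, (g.1 • w ∈ B.1.1) = (g.1 • z ∈ B.1.1)) ∧
        ((g.1 • w ∈ A k) = (g.1 • z ∈ A k)) ∧ κ k (g.1 • w) = κ k (g.1 • z)) := by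
      rw [Filter.eventually_all]
      intro g
      refine Filter.Eventually.and ?_ (Filter.Eventually.and (hcl _ (s.hA k) g.1) ?_)
      · rw [Filter.eventually_all]
        exact fun B => hcl _ B.1.2 g.1
      · exact ((hsm g.1).tendsto z).eventually ((s.hκ k).eventually_eq (g.1 • z))
    filter_upwards [this] with w hw
    funext g
    obtain ⟨a1, a2, a3⟩ := hw g
    refine Prod.ext (funext fun B => a1 B) (Prod.ext a2 a3)
  let Q := Set.range ℓ
  have hQ : Finite Q := hℓ.range_finite
  let p : X → Q := fun x => ⟨ℓ (π x), π x, rfl⟩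
  have hp : IsLocallyConstant p := by
    have h1 : IsLocallyConstant fun x => ℓ (π x) := hℓ.comp_continuous s.hπ
    rw [IsLocallyConstant.iff_eventually_eq] at h1 ⊢
    intro x
    filter_upwards [h1 x] with w hw
    exact Subtype.ext hw
  let y : X → (F' × Fin d × Fin 3) → ℝ := fun x i =>
    if i.1.1 • π x ∈ A k then (c x i.1.1 i.2.1).1 i.2.2 else 0
  have hy : Continuous y := by
    refine continuous_pi fun i => ?_
    have hcl : IsClopen {x | i.1.1 • π x ∈ A k} :=
      (s.hA k).preimage ((continuous_const_smul i.1.1).comp s.hπ)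
    have h1 : Continuous fun x => (c x i.1.1 i.2.1).1 i.2.2 :=
      (continuous_apply i.2.2).comp (continuous_subtype_val.comp
        ((continuous_apply i.2.1).comp ((continuous_apply i.1.1).comp s.hc)))
    show Continuous fun x => if i.1.1 • π x ∈ A k then (c x i.1.1 i.2.1).1 i.2.2 else 0
    refine Continuous.if (fun a ha => ?_) h1 continuous_const
    rw [hcl.frontier_eq] at ha
    exact absurd ha (Set.notMem_empty a)
  refine UP.widim_le_of p hp y hy ?_ ?_ ?_
  · intro x i
    simp only [y]
    split_ifs
    · exact (c x i.1.1 i.2.1).2.1 i.2.2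
    · exact ⟨le_rfl, zero_le_one⟩
  · intro x
    have hex : ∀ q : F' × Fin d, ∃ j : Fin 3, ∀ j' ≠ j, (c x q.1.1 q.2).1 j' = 0 := by
      intro q
      by_cases h0 : ∃ j, (c x q.1.1 q.2).1 j ≠ 0
      · obtain ⟨j, hj⟩ := h0
        refine ⟨j, fun j' hj' => ?_⟩
        exact ((c x q.1.1 q.2).2.2 j' j hj').resolve_right hj
      · push Not at h0
        exact ⟨0, fun j' _ => h0 j'⟩
    choose J hJ using hex
    let V : Finset F' := Finset.univ.filter fun g => g.1 • π x ∈ A k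
    refine ⟨(V ×ˢ (Finset.univ : Finset (Fin d))).image fun q => (q.1, q.2, J q), ?_, ?_⟩
    · refine Finset.card_image_le.trans ?_
      rw [Finset.card_product, Finset.card_univ, Fintype.card_fin]
      refine Nat.mul_le_mul_right _ (le_trans ?_ (hm (π x)))
      unfold vis
      refine Finset.card_le_card_of_injOn (fun g => g.1) ?_ (fun a _ b _ h => Subtype.ext h)
      intro g hg
      rw [Finset.mem_coe, Finset.mem_filter] at hg ⊢
      exact ⟨g.2, hg.2⟩
    · rintro ⟨g, i, j⟩ hi
      simp only [y]
      split_ifs with hg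
      · refine hJ (g, i) j ?_
        rintro rfl
        apply hi
        rw [Finset.mem_image]
        exact ⟨(g, i), Finset.mem_product.2 ⟨Finset.mem_filter.2 ⟨Finset.mem_univ _, hg⟩,
          Finset.mem_univ _⟩, rfl⟩
      · rfl
  · intro x x' hpx hyx
    have hl : ∀ g : F', ℓ (π x) g = ℓ (π x') g := congrFun (congrArg Subtype.val hpx)
    have hcc : ∀ g ∈ F', c x g = c x' g := by
      intro g hg
      have h1 := hl ⟨g, hg⟩
      have hAA : (g • π x ∈ A k) = (g • π x' ∈ A k) := congrArg (fun q => q.2.1) h1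
      have hκκ : κ k (g • π x) = κ k (g • π x') := congrArg (fun q => q.2.2) h1
      by_cases hgA : g • π x ∈ A k
      · have hgA' : g • π x' ∈ A k := hAA ▸ hgA
        funext i
        refine Subtype.ext (funext fun j => ?_)
        have := congrFun hyx (⟨g, hg⟩, i, j)
        simpa only [y, if_pos hgA, if_pos hgA'] using this
      · have hgA' : g • π x' ∉ A k := fun h => hgA (hAA ▸ h)
        rw [s.hX k x g hgA, s.hX k x' g hgA', hκκ]
    refine dyn_lt F ε hε x x' fun g hg => htt _ _ ?_ ?_
    · intro B hB
      rw [s.hπg, s.hπg]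
      have h1 := congrFun (congrArg (fun q => q.1) (hl ⟨g, hFF hg⟩)) ⟨B, hB⟩
      exact iff_of_eq h1
    · intro h hh
      rw [s.hcg, s.hcg]
      exact hcc _ (hWF h hh g hg)

open Pointwise in
lemma nonemb (s : Sys d A κ φ π c) [DecidableEq G] (hd : 0 < d)
    (hW : ∀ W : Finset G, ∃ (F S : Finset G) (z : Z), S ⊆ F ∧ (∀ h ∈ S, ∀ m, h • z ∈ A m) ∧
        (W * F).card < 2 * S.card) :
    ¬ ∃ f : X → (G → Fin d → Set.Icc (0 : ℝ) 1),
          Continuous f ∧ Function.Injective f ∧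
            ∀ (g : G) (x : X), f (φ g x) = shift g (f x) := by
  rintro ⟨f, hf, hinj, heq⟩
  obtain ⟨ε, hε, hε'⟩ := eps s
  obtain ⟨W, hWε⟩ := UP.unif (fun h : G => {q : X × X | f q.1 h ≠ f q.2 h})
    (fun h => isOpen_ne_fun ((continuous_apply h).comp (hf.comp continuous_fst))
        ((continuous_apply h).comp (hf.comp continuous_snd)))
    (fun x x' hne => Function.ne_iff.1 (hinj.ne hne)) ε hε
  obtain ⟨F, S, z, h1, h2, h3⟩ := hW W
  obtain ⟨ψ, hψ, hψ'⟩ := cube s z S h2 ε hε'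
  let τ : ((W * F : Finset G) × Fin d) ≃ Fin (Fintype.card ((W * F : Finset G) × Fin d)) :=
    Fintype.equivFin _
  obtain ⟨y, y', hy, hj⟩ := TP.TL (S × Fin d) (Fintype.card ((W * F : Finset G) × Fin d))
    (by
      rw [Fintype.card_prod, Fintype.card_prod, Fintype.card_coe, Fintype.card_coe,
        Fintype.card_fin]
      nlinarith)
    (fun y k => ((f (ψ y) (τ.symm k).1.1 (τ.symm k).2 : Set.Icc (0 : ℝ) 1) : ℝ))
    (continuous_pi fun k => continuous_subtype_val.comp
      ((continuous_apply (τ.symm k).2).comp ((continuous_apply (τ.symm k).1.1).comp (hf.comp hψ))))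
  obtain ⟨g, hg, hge⟩ := hψ' y y' hj
  refine absurd (hWε (φ g (ψ y)) (φ g (ψ y')) ?_) (not_lt.2 hge)
  intro h hh hne
  apply hne
  simp only [heq, shift]
  funext i
  have hmem : h * g ∈ W * F := Finset.mul_mem_mul hh (h1 hg)
  have := congrFun hy (τ (⟨h * g, hmem⟩, i))
  simp only [Equiv.symm_apply_apply] at this
  exact Subtype.ext this

end
end SY


namespace SY
open DN

section
variable {G Z X : Type} [Group G] [MulAction G Z] [TopologicalSpace Z] [CompactSpace Z] [T2Space Z]
  [TotallyDisconnectedSpace Z] [ContinuousConstSMul G Z] [MetricSpace X] [CompactSpace X]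
  {d : ℕ} {A : ℕ → Set Z} {κ : ℕ → Z → (Fin d → TripodSet)} {φ : G → X → X} {π : X → Z}
  {c : X → G → (Fin d → TripodSet)}

lemma exists_rich [Nonempty Z] (hA : ∀ n, IsClopen (A n)) (hanti : Antitone A)
    (hD : ∀ n, 1 / 2 < D G (A n)) (F : Finset G) : ∃ (z : Z) (S : Finset G), S ⊆ F ∧
    (∀ g ∈ S, ∀ m, g • z ∈ A m) ∧ F.card ≤ 2 * S.card := by
  classical
  let C : ℕ → Set Z := fun n => {z | F.card ≤ 2 * vis F (A n) z}
  have hCne : ∀ n, (C n).Nonempty := by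
    intro n
    obtain ⟨z, hz⟩ := exists_mv F (A n)
    refine ⟨z, ?_⟩
    have h1 := D_mul_le (A n) F
    have h2 := hD n
    rw [← hz] at h1
    have h3 : (F.card : ℝ) ≤ 2 * vis F (A n) z := by
      have : (0 : ℝ) ≤ F.card := by positivity
      nlinarith
    show F.card ≤ 2 * vis F (A n) z
    exact_mod_cast h3
  have hCcl : ∀ n, IsClosed (C n) := by
    intro n
    have : C n = ⋃ S ∈ (F.powerset.filter fun S => F.card ≤ 2 * S.card),
        ⋂ g ∈ S, {z | g • z ∈ A n} := by
      ext z
      rw [Set.mem_iUnion₂]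
      constructor
      · intro hz
        refine ⟨F.filter fun h => h • z ∈ A n, ?_, ?_⟩
        · rw [Finset.mem_filter, Finset.mem_powerset]
          refine ⟨Finset.filter_subset _ _, ?_⟩
          have : vis F (A n) z = (F.filter fun h => h • z ∈ A n).card := by unfold vis; congr
          rw [← this]; exact hz
        · rw [Set.mem_iInter₂]
          intro g hg
          exact (Finset.mem_filter.1 hg).2
      · rintro ⟨S, hS, hz⟩
        rw [Finset.mem_filter, Finset.mem_powerset] at hS
        rw [Set.mem_iInter₂] at hz
        refine hS.2.trans (Nat.mul_le_mul_left _ ?_)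
        unfold vis
        refine Finset.card_le_card fun g hg => ?_
        rw [Finset.mem_filter]
        exact ⟨hS.1 hg, hz g hg⟩
    rw [this]
    refine Set.Finite.isClosed_biUnion (Finset.finite_toSet _) fun S _ => ?_
    exact isClosed_biInter fun g _ => (hA n).isClosed.preimage (continuous_const_smul g)
  obtain ⟨z, hz⟩ := IsCompact.nonempty_iInter_of_sequence_nonempty_isCompact_isClosed C
    (fun n z hz => le_trans hz (Nat.mul_le_mul_left _ (vis_mono F (hanti (Nat.le_succ n)) z)))
    hCne (hCcl 0).isCompact hCcl
  rw [Set.mem_iInter] at hz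
  have hN : ∀ g : G, ∃ N, (∃ m, g • z ∉ A m) → g • z ∉ A N := by
    intro g
    by_cases h : ∃ m, g • z ∉ A m
    · obtain ⟨m, hm⟩ := h
      exact ⟨m, fun _ => hm⟩
    · exact ⟨0, fun h' => absurd h' h⟩
  choose N hN using hN
  let M := F.sup N
  refine ⟨z, F.filter fun h => h • z ∈ A M, Finset.filter_subset _ _, ?_, ?_⟩
  · intro g hg m
    rw [Finset.mem_filter] at hg
    by_contra hcon
    exact hN g ⟨m, hcon⟩ (hanti (Finset.le_sup hg.1) hg.2)
  · have : vis F (A M) z = (F.filter fun h => h • z ∈ A M).card := by unfold vis; congr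
    rw [← this]; exact hz M

lemma mdim_ge [Nonempty Z] (s : Sys d A κ φ π c) (hanti : Antitone A) (hD : ∀ n, 1 / 2 < D G (A n))
    (F : ℕ → Finset G) (hF : ∀ n, (F n).Nonempty) (Fs : ℕ → Set G) (hFs : ∀ n, (F n : Set G) = Fs n) :
    (d : ℝ≥0∞) / 2 ≤ mdimAlong φ Fs := by
  obtain ⟨ε, hε, hε'⟩ := eps s
  refine le_trans ?_ (le_iSup _ (⟨ε, hε⟩ : {ε : ℝ // 0 < ε}))
  have hle : ∀ n, (d : ℝ≥0∞) / 2 ≤ ((widim X (dynDist φ (Fs n)) ε : ℕ∞) : ℝ≥0∞) /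
      ((Fs n).ncard : ℝ≥0∞) := by
    intro n
    obtain ⟨z, S, h1, h2, h3⟩ := exists_rich s.hA hanti hD (F n)
    have h4 := widim_ge s z S (F n) h1 h2 ε hε'
    rw [← hFs, Set.ncard_coe_finset]
    have hpos : ((F n).card : ℝ≥0∞) ≠ 0 := by
      exact_mod_cast (hF n).card_pos.ne'
    rw [ENNReal.le_div_iff_mul_le (Or.inl hpos) (Or.inl (ENNReal.natCast_ne_top _))]
    have h5 : (((S.card * d : ℕ) : ℕ∞) : ℝ≥0∞) ≤
        ((widim X (dynDist φ (F n : Set G)) ε : ℕ∞) : ℝ≥0∞) := ENat.toENNReal_le.2 h4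
    refine le_trans ?_ h5
    rw [ENat.toENNReal_coe]
    rw [mul_comm, ← mul_div_assoc]
    refine ENNReal.div_le_of_le_mul ?_
    have : (F n).card * d ≤ (S.card * d) * 2 := by nlinarith
    exact_mod_cast this
  refine le_trans ?_ (Filter.limsup_le_limsup (u := fun _ : ℕ => (d : ℝ≥0∞) / 2)
    (Filter.Eventually.of_forall hle))
  rw [Filter.limsup_const]

open Pointwise in
lemma mdim_le (s : Sys d A κ φ π c) [DecidableEq G]
    (hD : ∀ n, D G (A (n + 1)) ≤ 1 / 2 + (1 / 2) ^ n)
    (F : ℕ → Finset G) (hF : Fol F) (Fs : ℕ → Set G) (hFs : ∀ n, (F n : Set G) = Fs n) :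
    mdimAlong φ Fs ≤ (d : ℝ≥0∞) / 2 := by
  refine iSup_le ?_
  rintro ⟨ε, hε⟩
  obtain ⟨W, hW1, hW⟩ := widim_le s ε hε
  have key : ∀ δ : ℝ, 0 < δ → Filter.limsup (fun n =>
      ((widim X (dynDist φ (Fs n)) ε : ℕ∞) : ℝ≥0∞) / ((Fs n).ncard : ℝ≥0∞)) atTop ≤
      ENNReal.ofReal (d * (1 / 2 + δ)) := by
    intro δ hδ
    obtain ⟨k, hk⟩ := exists_pow_lt_of_lt_one (half_pos hδ) (show (1 / 2 : ℝ) < 1 by norm_num)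
    have e1 := ev_vis hF (A (k + 1)) (1 / 2 + δ / 2) (by linarith [hD k])
    have e2 := (Fol_mul hF W).eventually_lt_const (half_pos hδ)
    refine Filter.limsup_le_of_le (by isBoundedDefault) ?_
    filter_upwards [e1, e2] with n h1 h2
    have hpos : (0 : ℝ) < (F n).card := by exact_mod_cast (hF.1 n).card_pos
    rw [div_lt_iff₀ hpos] at h2
    have hb : ∀ z, vis (W * F n) (A (k + 1)) z ≤ ⌊(1 / 2 + δ) * (F n).card⌋₊ := by
      intro z
      refine Nat.le_floor ?_
      have h3 : (vis (W * F n) (A (k + 1)) z : ℝ) ≤ vis (F n) (A (k + 1)) z +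
          ((W * F n) \ F n).card := by
        exact_mod_cast vis_le_add (F n) (W * F n) (A (k + 1)) z
      have h4 := h1 z
      nlinarith
    have h5 := hW (k + 1) (F n) (W * F n) (fun g hg => by
        have := Finset.mul_mem_mul hW1 hg
        rwa [one_mul] at this) (fun w hw g hg => Finset.mul_mem_mul hw hg) _ hb
    rw [← hFs, Set.ncard_coe_finset]
    have h6 : widim X (dynDist φ (F n : Set G)) ε ≤
        ((⌊(1 / 2 + δ) * (F n).card⌋₊ * d : ℕ) : ℕ∞) := sInf_le ⟨_, rfl, h5⟩
    have h7 := ENat.toENNReal_le.2 h6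
    refine ENNReal.div_le_of_le_mul (h7.trans ?_)
    rw [ENat.toENNReal_coe, ← ENNReal.ofReal_natCast, ← ENNReal.ofReal_natCast (F n).card,
      ← ENNReal.ofReal_mul (by positivity)]
    refine ENNReal.ofReal_le_ofReal ?_
    have h8 := Nat.floor_le (show 0 ≤ (1 / 2 + δ) * (F n).card by positivity)
    push_cast
    have hd0 : (0 : ℝ) ≤ d := by positivity
    nlinarith
  have hlim : Tendsto (fun k : ℕ => ENNReal.ofReal (d * (1 / 2 + 1 / ((k : ℝ) + 1)))) atTop
      (𝓝 (ENNReal.ofReal (d * (1 / 2 + 0)))) := by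
    refine ENNReal.tendsto_ofReal ?_
    exact (tendsto_one_div_add_atTop_nhds_zero_nat.const_add (1 / 2)).const_mul _
  have := ge_of_tendsto' hlim fun k => key _ (by positivity)
  refine this.trans (le_of_eq ?_)
  rw [add_zero, mul_one_div, ENNReal.ofReal_div_of_pos (by norm_num), ENNReal.ofReal_natCast]
  norm_num

end
end SY


namespace FIN
open DN

section
variable {G Z K : Type} [Group G] [MulAction G Z]

/-- the final space -/
def XI (G : Type) [Group G] {Z K : Type} [MulAction G Z] (A : ℕ → Set Z) (κ : ℕ → Z → K) :
    Set (Z × (G → K)) := {p | ∀ n, p ∈ XX G (A n) (κ n)}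

/-- the action -/
def act (A : ℕ → Set Z) (κ : ℕ → Z → K) (g : G) (p : XI G A κ) : XI G A κ :=
  ⟨(g • p.1.1, fun h => p.1.2 (h * g)), fun n h hh => by
    have := p.2 n (h * g) (by rw [mul_smul]; exact hh)
    simp only [mul_smul] at this
    exact this⟩

variable {A : ℕ → Set Z} {κ : ℕ → Z → K}

lemma coh (hanti : Antitone A) (hκ : ∀ n, ∀ z ∉ A n, κ (n + 1) z = κ n z) (m : ℕ) (u : Z)
    (hu : u ∉ A m) (n : ℕ) (hmn : m ≤ n) : κ n u = κ m u := by
  induction n, hmn using Nat.le_induction with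
  | base => rfl
  | succ n hn ih => rw [hκ n u (fun h => hu (hanti hn h)), ih]

open Classical in
/-- base values -/
noncomputable def base [Nonempty K] (A : ℕ → Set Z) (κ : ℕ → Z → K) (u : Z) : K :=
  if h : ∃ n, u ∉ A n then κ (Nat.find h) u else Classical.arbitrary K

lemma base_eq [Nonempty K] (hanti : Antitone A) (hκ : ∀ n, ∀ z ∉ A n, κ (n + 1) z = κ n z)
    (n : ℕ) (u : Z) (hu : u ∉ A n) : base A κ u = κ n u := by
  classical
  have h : ∃ n, u ∉ A n := ⟨n, hu⟩
  unfold base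
  rw [dif_pos h]
  exact (coh hanti hκ _ u (Nat.find_spec h) n (Nat.find_min' h hu)).symm

lemma fib [Nonempty K] [TopologicalSpace Z] [TopologicalSpace K] (hanti : Antitone A)
    (hκ : ∀ n, ∀ z ∉ A n, κ (n + 1) z = κ n z) (z : Z) (S : Finset G)
    (hS : ∀ g ∈ S, ∀ m, g • z ∈ A m) :
    ∃ ψ : (S → K) → XI G A κ, Continuous ψ ∧ ∀ y s, (ψ y).1.2 s.1 = y s := by
  classical
  let x : (S → K) → G → K := fun y g => if h : g ∈ S then y ⟨g, h⟩ else base A κ (g • z)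
  have hx : ∀ y, (z, x y) ∈ XI G A κ := by
    intro y n g hg
    have hgS : g ∉ S := fun h => hg (hS g h n)
    simp only [x, dif_neg hgS]
    exact base_eq hanti hκ n _ hg
  refine ⟨fun y => ⟨(z, x y), hx y⟩, ?_, ?_⟩
  · refine Continuous.subtype_mk (continuous_const.prodMk (continuous_pi fun g => ?_)) _
    by_cases h : g ∈ S
    · simp only [x, dif_pos h]; exact continuous_apply _
    · simp only [x, dif_neg h]; exact continuous_const
  · intro y s
    simp only [x, dif_pos s.2]

lemma closed [TopologicalSpace Z] [ContinuousConstSMul G Z] [TopologicalSpace K] [T2Space K]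
    (hA : ∀ n, IsClopen (A n)) (hκ : ∀ n, IsLocallyConstant (κ n)) : IsClosed (XI G A κ) := by
  have : XI G A κ = ⋂ n, ⋂ g : G, ({p : Z × (G → K) | g • p.1 ∈ A n} ∪
      {p | p.2 g = κ n (g • p.1)}) := by
    ext p
    simp only [Set.mem_iInter, Set.mem_union]
    constructor
    · intro h n g
      by_cases hg : g • p.1 ∈ A n
      · exact Or.inl hg
      · exact Or.inr (h n g hg)
    · intro h n g hg
      exact (h n g).resolve_left hg
  rw [this]
  refine isClosed_iInter fun n => isClosed_iInter fun g => IsClosed.union ?_ ?_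
  · exact (hA n).isClosed.preimage ((continuous_const_smul g).comp continuous_fst)
  · exact isClosed_eq ((continuous_apply g).comp continuous_snd)
      ((hκ n).continuous.comp ((continuous_const_smul g).comp continuous_fst))

lemma act_cont [TopologicalSpace Z] [ContinuousConstSMul G Z] [TopologicalSpace K] (g : G) :
    Continuous (act A κ g) := by
  refine Continuous.subtype_mk (Continuous.prodMk ?_ (continuous_pi fun h => ?_)) _
  · exact (continuous_const_smul g).comp (continuous_fst.comp continuous_subtype_val)
  · exact (continuous_apply (h * g)).comp (continuous_snd.comp continuous_subtype_val)

lemma act_one (p : XI G A κ) : act A κ 1 p = p := by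
  refine Subtype.ext (Prod.ext ?_ (funext fun h => ?_))
  · exact one_smul _ _
  · show p.1.2 (h * 1) = _
    rw [mul_one]

lemma act_mul (g h : G) (p : XI G A κ) : act A κ (g * h) p = act A κ g (act A κ h p) := by
  refine Subtype.ext (Prod.ext ?_ (funext fun k => ?_))
  · exact mul_smul _ _ _
  · show p.1.2 (k * (g * h)) = p.1.2 (k * g * h)
    rw [mul_assoc]

lemma minimal [TopologicalSpace Z] [ContinuousConstSMul G Z] [MulAction.IsMinimal G Z]
    [TopologicalSpace K] (B : Set (Set (Z × (G → K)))) (hB : TopologicalSpace.IsTopologicalBasis B)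
    (O : ℕ → Set (Z × (G → K))) (hBO : B ⊆ Set.range O)
    (hO : ∀ n, (XX G (A n) (κ n) ∩ O n).Nonempty → ∃ V : Set Z, IsOpen V ∧ V.Nonempty ∧
        ∀ p ∈ XX G (A (n + 1)) (κ (n + 1)), p.1 ∈ V → p ∈ O n) (p : XI G A κ) :
    Dense (Set.range fun g : G => act A κ g p) := by
  rw [dense_iff_inter_open]
  rintro U hU ⟨q, hq⟩
  obtain ⟨U', hU', rfl⟩ := isOpen_induced_iff.1 hU
  obtain ⟨b, hb, hqb, hbU⟩ := hB.exists_subset_of_mem_open hq hU'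
  obtain ⟨n, rfl⟩ := hBO hb
  obtain ⟨V, hV, hVne, h⟩ := hO n ⟨q.1, q.2 n, hqb⟩
  obtain ⟨g, hg⟩ := hV.exists_smul_mem G p.1.1 hVne
  exact ⟨act A κ g p, hbU (h _ ((act A κ g p).2 (n + 1)) hg), g, rfl⟩

end

lemma tripod_compact : CompactSpace TripodSet := by
  rw [← isCompact_iff_compactSpace]
  have h1 : IsCompact (Set.pi Set.univ fun _ : Fin 3 => Set.Icc (0 : ℝ) 1) :=
    isCompact_univ_pi fun _ => isCompact_Icc
  refine h1.of_isClosed_subset ?_ (fun x hx i _ => hx.1 i)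
  have : TripodSet = (⋂ i, {x : Fin 3 → ℝ | x i ∈ Set.Icc (0 : ℝ) 1}) ∩
      ⋂ i, ⋂ j, ⋂ (_ : i ≠ j), ({x : Fin 3 → ℝ | x i = 0} ∪ {x | x j = 0}) := by
    ext x
    simp only [TripodSet, Set.mem_inter_iff, Set.mem_iInter, Set.mem_union]
    rfl
  rw [this]
  refine IsClosed.inter (isClosed_iInter fun i => isClosed_Icc.preimage (continuous_apply i)) ?_
  refine isClosed_iInter fun i => isClosed_iInter fun j => isClosed_iInter fun _ =>
    IsClosed.union ?_ ?_
  · exact isClosed_eq (continuous_apply i) continuous_const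
  · exact isClosed_eq (continuous_apply j) continuous_const

lemma tripod_nonempty : Nonempty TripodSet :=
  ⟨⟨0, fun _ => ⟨le_rfl, zero_le_one⟩, fun _ _ _ => Or.inl rfl⟩⟩

end FIN

/-- **Theorem (main).** For every infinite countable discrete amenable group `G` and every
positive integer `d`, there is a compact metric space `X` with a continuous minimal `G`-action
of mean dimension `d/2` which cannot be embedded in the full `G`-shift on `([0,1]^d)^G`. -/
theorem exists_minimal_action_mdim_half_d_nonembeddable (G : Type) [Group G] [Countable G]
    [Infinite G] (hG : AmenableGroup G) (d : ℕ) (hd : 0 < d) :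
    ∃ (X : Type) (_ : MetricSpace X) (φ : G → X → X),
      CompactSpace X ∧ Nonempty X ∧
      (∀ g : G, Continuous (φ g)) ∧
      (∀ x : X, φ 1 x = x) ∧
      (∀ g h : G, ∀ x : X, φ (g * h) x = φ g (φ h x)) ∧
      (∀ x : X, Dense (Set.range fun g : G => φ g x)) ∧
      (∀ F : ℕ → Set G, IsFolnerSeq F → mdimAlong φ F = (d : ℝ≥0∞) / 2) ∧
      ¬ ∃ f : X → (G → Fin d → Set.Icc (0 : ℝ) 1),
          Continuous f ∧ Function.Injective f ∧
            ∀ (g : G) (x : X), f (φ g x) = shift g (f x) := by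
  classical
  obtain ⟨Z, tZ, mZ, hZc, hZt2, hZsc, hZtd, hZne, hZcont, hfree, hZmin⟩ := ZD.exists_Z G
  have := FIN.tripod_compact
  have := FIN.tripod_nonempty
  obtain ⟨F0, hF0⟩ := hG
  obtain ⟨Fs, _, hFs⟩ := DN.Fol_of hF0
  let K := Fin d → TripodSet
  obtain ⟨B, hBc, _, hB⟩ := TopologicalSpace.exists_countable_basis (Z × (G → K))
  have hBne : B.Nonempty := by
    obtain ⟨b, hb, _⟩ := hB.exists_subset_of_mem_open
      (Set.mem_univ (Classical.arbitrary (Z × (G → K)))) isOpen_univ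
    exact ⟨b, hb⟩
  obtain ⟨O, hOB⟩ := hBc.exists_eq_range hBne
  obtain ⟨W, hW⟩ := exists_surjective_nat (Finset G)
  obtain ⟨A, κ, h1, h2, h3, h4, h5, h6, h7, h8⟩ := DN.exists_seq (K := K) hfree hFs O
    (fun n => hB.isOpen (hOB ▸ Set.mem_range_self n)) W
  let X := FIN.XI G A κ
  have hcl : IsClosed X := FIN.closed h1 h2
  have hXc : CompactSpace X := isCompact_iff_compactSpace.1 hcl.isCompact
  letI : MetricSpace X := TopologicalSpace.metrizableSpaceMetric X
  obtain ⟨ψ0, _⟩ := FIN.fib (K := K) h5 h6 (Classical.arbitrary Z) (∅ : Finset G) (by simp)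
  have hsys : SY.Sys d A κ (FIN.act A κ) (fun p : X => p.1.1) (fun p : X => p.1.2) :=
    { hA := h1
      hκ := h2
      hπ := continuous_fst.comp continuous_subtype_val
      hc := continuous_snd.comp continuous_subtype_val
      hπg := fun g x => rfl
      hcg := fun g x h => rfl
      hinj := fun x x' h h' => Subtype.ext (Prod.ext h h')
      hX := fun n x g hg => x.2 n g hg
      hfib := fun z S hS => FIN.fib h5 h6 z S hS }
  refine ⟨X, inferInstance, FIN.act A κ, hXc, ⟨ψ0 fun _ => Classical.arbitrary K⟩,
    fun g => FIN.act_cont g, FIN.act_one, FIN.act_mul, FIN.minimal B hB O hOB.subset h7, ?_, ?_⟩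
  · intro F hF
    obtain ⟨F', hF', hFol⟩ := DN.Fol_of hF
    exact le_antisymm (SY.mdim_le hsys h4 F' hFol F hF') (SY.mdim_ge hsys h5 h3 F' hFol.1 F hF')
  · refine SY.nonemb hsys hd fun V => ?_
    obtain ⟨n, rfl⟩ := hW V
    exact h8 n
end

section
/- Let $G$ be an infinite countable discrete amenable group and let $\mathcal{T}$ be a finite tiling of $G$. Then for any $\epsilon > 0$ there exist a nonempty finite subset $K$ of $G$ and $\delta > 0$ such that for each $g \in G$ and each $(K,\delta)$-invariant nonempty finite subset $F$ of $G$, the union of those $\mathcal{T}g$-tiles which are contained in $F$ has cardinality greater than $(1-\epsilon)|F|$, i.e., $|\bigcup_{T \in \mathcal{T}g,\, T \subset F} T| > (1-\epsilon)|F|$. -/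
open Set Filter Topology
open scoped ENNReal NNReal symmDiff

/-- **Proposition.** If `𝒯` is a finite tiling of an infinite countable amenable group `G`,
then for every `ε > 0` there are a nonempty finite `K ⊆ G` and `δ > 0` such that for every
`g ∈ G` and every `(K,δ)`-invariant nonempty finite `F ⊆ G`, the union of the `𝒯g`-tiles
contained in `F` has cardinality greater than `(1-ε)|F|`. -/
theorem tiles_fill_invariant_sets (G : Type*) [Group G] [Countable G] [Infinite G]
    (hG : AmenableGroup G) (𝒯 : Set (Set G)) (ht : IsTilingOf 𝒯)
    (hfin : ∃ 𝒮 : Set (Set G), IsShapeSet 𝒯 𝒮) (ε : ℝ) (hε : 0 < ε) :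
    ∃ K : Set G, K.Finite ∧ K.Nonempty ∧ ∃ δ > (0 : ℝ), ∀ g : G, ∀ F : Set G,
      F.Finite → F.Nonempty → IsInvariantSet F K δ →
        (1 - ε) * (F.ncard : ℝ) <
          ((⋃₀ {T' ∈ tilingTranslate 𝒯 g | T' ⊆ F}).ncard : ℝ) := by
  classical
  obtain ⟨𝒮, h𝒮, hS, hT⟩ := hfin
  have hKfin : (insert (1 : G) (⋃ S ∈ 𝒮, Set.image2 (fun s t => s * t⁻¹) S S)).Finite :=
    (h𝒮.biUnion (fun S h => (hS S h).1.image2 _ (hS S h).1)).insert 1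
  set K : Set G := insert (1 : G) (⋃ S ∈ 𝒮, Set.image2 (fun s t => s * t⁻¹) S S) with hK
  refine ⟨K, hKfin, ⟨1, Or.inl rfl⟩, ε, hε, ?_⟩
  intro g F hF _ hinv
  unfold IsInvariantSet at hinv
  set U : Set G := ⋃₀ {T' ∈ tilingTranslate 𝒯 g | T' ⊆ F} with hU
  have hUF : U ⊆ F := Set.sUnion_subset fun T h => h.2
  have hBfin : (Bset F K).Finite := by
    refine (hKfin.image2 (fun k f => k⁻¹ * f) hF).subset ?_
    rintro x ⟨⟨y, ⟨k, hk, rfl⟩, hy⟩, -⟩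
    exact ⟨k, hk, k * x, hy, by simp⟩
  have hsub : F \ U ⊆ Bset F K := by
    rintro x ⟨hxF, hxU⟩
    refine ⟨⟨x, ⟨1, Or.inl rfl, by simp⟩, hxF⟩, ?_⟩
    have hx : x * g⁻¹ ∈ ⋃₀ 𝒯 := by rw [ht.2.2]; trivial
    obtain ⟨T, hT𝒯, hxT⟩ := hx
    have hmem : rightTranslate T g ∈ tilingTranslate 𝒯 g := ⟨T, hT𝒯, rfl⟩
    have hxT' : x ∈ rightTranslate T g := ⟨x * g⁻¹, hxT, by simp⟩
    have hnot : ¬ rightTranslate T g ⊆ F := fun h => hxU ⟨_, ⟨hmem, h⟩, hxT'⟩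
    obtain ⟨y, hyT, hyF⟩ := Set.not_subset.mp hnot
    obtain ⟨S, hS𝒮, c, rfl⟩ := hT T hT𝒯
    obtain ⟨t, htS, htx⟩ := hxT
    obtain ⟨_, ⟨s, hsS, rfl⟩, rfl⟩ := hyT
    refine ⟨_, ⟨s * t⁻¹, Or.inr ?_, ?_⟩, hyF⟩
    · exact Set.mem_biUnion hS𝒮 ⟨s, hsS, t, htS, rfl⟩
    · have : x = t * c * g := by
        have h : t * c = x * g⁻¹ := htx
        rw [h]; simp
      rw [this]; simp [mul_assoc]
  have h1 : (F \ U).ncard ≤ (Bset F K).ncard := Set.ncard_le_ncard hsub hBfin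
  have h2 : (F \ U).ncard + U.ncard = F.ncard := Set.ncard_sdiff_add_ncard_of_subset hUF hF
  have h1' : ((F \ U).ncard : ℝ) ≤ (Bset F K).ncard := by exact_mod_cast h1
  have h2' : ((F \ U).ncard : ℝ) + U.ncard = F.ncard := by exact_mod_cast h2
  linarith
end

section
/- Let $G$ be an infinite countable discrete amenable group, $\mathcal{T}$ a syndetic finite tiling of $G$, and $\mathcal{S}_{\mathcal{T}}$ a set of shapes of $\mathcal{T}$. Then for any positive integer $n$ there exist a nonempty finite subset $K$ of $G$ and $\epsilon > 0$ such that for every shape $S \in \mathcal{S}_{\mathcal{T}}$ and every $(K,\epsilon)$-invariant nonempty finite subset $F$ of $G$, the set $F$ contains at least $n$ pairwise distinct $\mathcal{T}$-tiles of the shape $S$ (i.e., there are at least $n$ elements $c \in C(S)$ with $Sc \subset F$). -/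
open Set Filter Topology
open scoped ENNReal NNReal symmDiff

/-- For a single shape with syndetic center there is a finite window all of whose right translates
contain at least `n` tiles of that shape. -/
theorem window_of_shape (G : Type*) [Group G] [Infinite G] (C S : Set G) (hS : S.Finite)
    (hSne : S.Nonempty) (hC : SyndeticSet C) (n : ℕ) :
    ∃ K : Set G, K.Finite ∧ ∀ (F : Set G) (g : G), F.Finite → rightTranslate K g ⊆ F →
      n ≤ ({c ∈ C | rightTranslate S c ⊆ F}).ncard := by
  obtain ⟨E, hE, hEC⟩ := hC
  obtain ⟨H, -, hHf, hHc⟩ :=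
    (Set.infinite_univ (α := G)).exists_subset_ncard_eq (n * E.ncard)
  refine ⟨(fun p : G × G × G => p.1 * (p.2.1⁻¹ * p.2.2)) '' (S ×ˢ (E ×ˢ H)),
    (hS.prod (hE.prod hHf)).image _, ?_⟩
  intro F g hF hK
  set A := {c ∈ C | rightTranslate S c ⊆ F} with hA
  obtain ⟨s, hs⟩ := hSne
  have hAf : A.Finite := by
    refine (hF.image (fun x => s⁻¹ * x)).subset ?_
    rintro c ⟨_, hc⟩
    exact ⟨s * c, hc ⟨s, hs, rfl⟩, by simp⟩
  have hsub : H ⊆ (fun p : G × G => p.1 * p.2 * g⁻¹) '' (E ×ˢ A) := by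
    intro h hh
    have : h * g ∈ Set.image2 (· * ·) E C := by rw [hEC]; trivial
    obtain ⟨e, he, c, hc, hec⟩ := this
    simp only at hec
    refine ⟨(e, c), ⟨he, hc, ?_⟩, by simp [hec]⟩
    rintro _ ⟨t, ht, rfl⟩
    refine hK ⟨t * (e⁻¹ * h), ⟨(t, e, h), ⟨ht, he, hh⟩, rfl⟩, ?_⟩
    have : c = e⁻¹ * (h * g) := by rw [← hec]; simp
    simp [this, mul_assoc]
  have h1 := Set.ncard_le_ncard hsub ((hE.prod hAf).image _)
  have h2 := h1.trans (Set.ncard_image_le (hE.prod hAf))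
  rw [Set.ncard_prod, hHc, mul_comm n] at h2
  have hEne : E.Nonempty := by
    have : (1 : G) ∈ Set.image2 (· * ·) E C := by rw [hEC]; trivial
    obtain ⟨e, he, -⟩ := this
    exact ⟨e, he⟩
  exact Nat.le_of_mul_le_mul_left h2 ((Set.ncard_pos hE).2 hEne)

/-- **Proposition.** If `𝒯` is a syndetic finite tiling of an infinite countable amenable group
`G` with shape set `𝒮`, then for every `n ≥ 1` there are a nonempty finite `K ⊆ G` and `ε > 0`
such that every `(K,ε)`-invariant nonempty finite `F ⊆ G` contains at least `n` `𝒯`-tiles of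
each shape `S ∈ 𝒮`. -/
theorem many_tiles_in_invariant_sets (G : Type*) [Group G] [Countable G] [Infinite G]
    (hG : AmenableGroup G) (𝒯 𝒮 : Set (Set G)) (ht : IsTilingOf 𝒯) (hs : IsShapeSet 𝒯 𝒮)
    (hsyn : ∀ S ∈ 𝒮, SyndeticSet (center 𝒯 S)) (n : ℕ) (hn : 0 < n) :
    ∃ K : Set G, K.Finite ∧ K.Nonempty ∧ ∃ ε > (0 : ℝ), ∀ S ∈ 𝒮, ∀ F : Set G,
      F.Finite → F.Nonempty → IsInvariantSet F K ε →
        n ≤ ({c ∈ center 𝒯 S | rightTranslate S c ⊆ F}).ncard := by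
  have key : ∀ S : 𝒮, ∃ K : Set G, K.Finite ∧ ∀ (F : Set G) (g : G), F.Finite →
      rightTranslate K g ⊆ F → n ≤ ({c ∈ center 𝒯 S.1 | rightTranslate S.1 c ⊆ F}).ncard :=
    fun S => window_of_shape G _ S.1 (hs.2.1 S.1 S.2).1 (hs.2.1 S.1 S.2).2 (hsyn S.1 S.2) n
  choose K hKf hK using key
  have : Finite 𝒮 := hs.1
  have hfin : (insert 1 (⋃ S, K S) : Set G).Finite := (Set.finite_iUnion hKf).insert 1
  refine ⟨insert 1 (⋃ S, K S), hfin, ⟨1, by simp⟩, 1, one_pos, ?_⟩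
  intro S hS F hF hFne hinv
  have hlt : (Bset F (insert 1 (⋃ S, K S))).ncard < F.ncard := by
    unfold IsInvariantSet at hinv
    rw [one_mul] at hinv
    exact_mod_cast hinv
  have hBf : (Bset F (insert 1 (⋃ S, K S))).Finite := by
    refine ((hfin.prod hF).image (fun p : G × G => p.1⁻¹ * p.2)).subset ?_
    rintro g ⟨⟨_, ⟨k, hk, rfl⟩, hx⟩, -⟩
    exact ⟨(k, k * g), ⟨hk, hx⟩, by simp⟩
  obtain ⟨g, hgF, hgB⟩ := Set.exists_mem_notMem_of_ncard_lt_ncard hlt hBf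
  refine hK ⟨S, hS⟩ F g hF ?_
  rintro x ⟨k, hk, rfl⟩
  by_contra hx
  exact hgB ⟨⟨g, ⟨1, by simp, by simp⟩, hgF⟩,
    ⟨k * g, ⟨k, Or.inr (Set.mem_iUnion.2 ⟨_, hk⟩), rfl⟩, hx⟩⟩
end
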